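/- arXiv:2010.15494 — 3 statements merged into one kernel-verified Lean document; each statement's English description precedes it below -/
import Mathlib

section
/- For the Gauss–Kuzmin measure μ and φ(x) = ⌊1/x⌋, one has for t → 0⁺: ∫₀¹ (e^{itφ(x)} − 1) dμ(x) = −(it/log 2)(log t + γ − πi/2) + O(t^{2−ε}) for every ε > 0, where γ is the Euler–Mascheroni constant. -/
open MeasureTheory

noncomputable def gaussMeasure : Measure ℝ :=
  (volume.restrict (Set.Ioo (0:ℝ) 1)).withDensity
    (fun x => ENNReal.ofReal (1 / ((1 + x) * Real.log 2)))

lemma gk_hs_congr {f g : ℕ → ℂ} {a b : ℂ} (h : HasSum f a) (hf : ∀ n, g n = f n) (hb : b = a) :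
    HasSum g b := by
  have : g = f := funext hf
  rw [this, hb]; exact h

/-- log weights -/
noncomputable def gkL (n : ℕ) : ℝ := Real.log (1 + 1 / ((n:ℝ) + 1))

noncomputable def gkq (n : ℕ) : ℝ :=
  (gkL n - gkL (n+1)) - (1 / ((n:ℝ) + 1) - 1 / ((n:ℝ) + 2))

lemma gk_log_bounds (u : ℝ) (hu : 0 < u) : u - u^2 ≤ Real.log (1+u) ∧ Real.log (1+u) ≤ u := by
  constructor
  · have h := Real.one_sub_inv_le_log_of_pos (x := 1+u) (by linarith)
    refine le_trans ?_ h
    have : 1 - (1+u)⁻¹ - (u - u^2) = u^3 / (1+u) := by field_simp; ring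
    have h2 : 0 ≤ u^3/(1+u) := by positivity
    linarith
  · have := Real.log_le_sub_one_of_pos (x := 1+u) (by linarith)
    linarith

lemma gkL_diff (n : ℕ) : gkL n - gkL (n+1) = Real.log (1 + 1 / (((n:ℝ)+1)*((n:ℝ)+3))) := by
  unfold gkL
  rw [← Real.log_div (by positivity) (by positivity)]
  congr 1
  push_cast
  field_simp
  ring

lemma gkq_bound (n : ℕ) : |gkq n| ≤ 2 / ((n:ℝ)+1)^3 := by
  unfold gkq
  rw [gkL_diff]
  set m : ℝ := (n:ℝ)+1 with hm
  have hm1 : 1 ≤ m := by simp [hm]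
  have e3 : (n:ℝ)+3 = m+2 := by rw [hm]; ring
  have e2 : (n:ℝ)+2 = m+1 := by rw [hm]; ring
  rw [e3, e2]
  obtain ⟨h1, h2⟩ := gk_log_bounds (1/(m*(m+2))) (by positivity)
  have a1 : 1/m - 1/(m+1) - 1/(m*(m+2)) = 1/(m*(m+1)*(m+2)) := by field_simp; ring
  have a2 : 1/(m*(m+1)*(m+2)) ≤ 1/m^3 := by
    apply one_div_le_one_div_of_le (by positivity)
    nlinarith [mul_pos (show 0 < m by linarith) (show 0 < m by linarith)]
  have a3 : (1/(m*(m+2)))^2 ≤ 1/m^3 := by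
    rw [div_pow, one_pow]
    apply one_div_le_one_div_of_le (by positivity)
    have : m^3 * 1 ≤ m^3 * (m + 4) := by gcongr; linarith
    nlinarith [mul_pos (show 0 < m by linarith) (show 0 < m by linarith)]
  have a4 : (0:ℝ) ≤ 1/(m*(m+1)*(m+2)) := by positivity
  have a5 : (2:ℝ)/m^3 = 1/m^3+1/m^3 := by ring
  have a6 : (0:ℝ) < 1/m^3 := by positivity
  rw [abs_le]
  constructor <;> linarith

lemma gk_partial (N : ℕ) : ∑ k ∈ Finset.range N, ((k:ℝ)+1) * gkq k =
    - Real.eulerMascheroniSeq N - N * (gkL N - 1/((N:ℝ)+1)) := by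
  induction N with
  | zero => simp [Real.eulerMascheroniSeq]
  | succ N ih =>
    rw [Finset.sum_range_succ, ih]
    unfold gkq Real.eulerMascheroniSeq
    rw [harmonic_succ]
    have : Real.log ((N:ℝ)+1+1) = Real.log ((N:ℝ)+1) + gkL N := by
      unfold gkL
      rw [← Real.log_mul (by positivity) (by positivity)]
      congr 1
      field_simp
    push_cast
    rw [this]
    have e2 : (N:ℝ)+1+1 = N+2 := by ring
    rw [e2]
    field_simp
    ring

lemma gk_summable_pow (s : ℝ) (hs : 1 < s) : Summable (fun n : ℕ => 1 / ((n:ℝ)+1)^s) := by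
  have := (summable_nat_add_iff 1).2 (Real.summable_one_div_nat_rpow.2 hs)
  simpa using this

lemma gk_hasSum_gamma :
    HasSum (fun n : ℕ => ((n:ℝ)+1) * gkq n) (-Real.eulerMascheroniConstant) := by
  have hs : Summable (fun n : ℕ => ((n:ℝ)+1) * gkq n) := by
    refine Summable.of_norm_bounded (g := fun n : ℕ => 2 * (1 / ((n:ℝ)+1)^(2:ℝ)))
      ((gk_summable_pow 2 (by norm_num)).mul_left 2) ?_
    intro n
    rw [Real.norm_eq_abs, abs_mul, abs_of_pos (by positivity : (0:ℝ) < (n:ℝ)+1)]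
    calc ((n:ℝ)+1) * |gkq n| ≤ ((n:ℝ)+1) * (2 / ((n:ℝ)+1)^3) := by
          gcongr; exact gkq_bound n
      _ = _ := by
          rw [Real.rpow_two]; field_simp
  rw [hs.hasSum_iff_tendsto_nat]
  simp_rw [gk_partial]
  have h0 : Filter.Tendsto (fun N : ℕ => (N:ℝ) * (gkL N - 1/((N:ℝ)+1))) Filter.atTop (nhds 0) := by
    have ht := tendsto_one_div_add_atTop_nhds_zero_nat (𝕜 := ℝ)
    refine squeeze_zero_norm (fun N => ?_) ht
    obtain ⟨h1, h2⟩ := gk_log_bounds (1/((N:ℝ)+1)) (by positivity)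
    have hb : |gkL N - 1/((N:ℝ)+1)| ≤ (1/((N:ℝ)+1))^2 := by
      unfold gkL
      rw [abs_le]
      constructor <;> nlinarith
    rw [Real.norm_eq_abs, abs_mul, Nat.abs_cast]
    calc (N:ℝ) * |gkL N - 1/((N:ℝ)+1)| ≤ ((N:ℝ)+1) * (1/((N:ℝ)+1))^2 := by
          gcongr; linarith
      _ = _ := by field_simp
  simpa using (Real.tendsto_eulerMascheroniSeq.neg).sub h0

lemma gk_exp_bound (ε x : ℝ) (hε : 0 < ε) (hε1 : ε < 1) (hx : 0 < x) :
    ‖Complex.exp (Complex.I * x) - 1 - Complex.I * x‖ ≤ 3 * x ^ (2 - ε) := by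
  have hn : ‖Complex.I * (x:ℂ)‖ = x := by simp [abs_of_pos hx]
  have hp : 0 < x ^ (2-ε) := Real.rpow_pos_of_pos hx _
  rcases le_total x 1 with h | h
  · have := Complex.norm_exp_sub_one_sub_id_le (x := Complex.I * x) (by rw [hn]; exact h)
    rw [hn] at this
    have h2 : x^2 ≤ x^(2-ε) := by
      rw [← Real.rpow_two]
      exact Real.rpow_le_rpow_of_exponent_ge hx h (by linarith)
    linarith
  · have h1 : x ≤ x^(2-ε) := by
      conv_lhs => rw [← Real.rpow_one x]
      exact Real.rpow_le_rpow_of_exponent_le h (by linarith)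
    have h2 := norm_sub_le (Complex.exp (Complex.I * x) - 1) (Complex.I * x)
    have h3 := norm_sub_le (Complex.exp (Complex.I * x)) 1
    rw [hn] at h2
    rw [Complex.norm_exp_I_mul_ofReal, norm_one] at h3
    linarith

lemma gk_second (ε : ℝ) (hε : 0 < ε) (hε1 : ε < 1) : ∃ C > (0:ℝ), ∀ t : ℝ, 0 < t →
    ∃ S : ℂ, HasSum (fun n : ℕ => (Complex.exp (Complex.I * t * ((n:ℂ)+1)) - 1) * (gkq n : ℂ)) S ∧
      ‖S + Complex.I * t * Real.eulerMascheroniConstant‖ ≤ C * t ^ (2 - ε) := by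
  have hsum := gk_summable_pow (1+ε) (by linarith)
  refine ⟨6 * (∑' n : ℕ, 1 / ((n:ℝ)+1)^(1+ε)) + 1, ?_, ?_⟩
  · have : 0 ≤ ∑' n : ℕ, 1 / ((n:ℝ)+1)^(1+ε) := tsum_nonneg (fun n => by positivity)
    linarith
  intro t ht
  have hb : ∀ n : ℕ, ‖(Complex.exp (Complex.I * t * ((n:ℂ)+1)) - 1 - Complex.I * t * ((n:ℂ)+1)) * (gkq n : ℂ)‖
      ≤ 6 * t^(2-ε) * (1 / ((n:ℝ)+1)^(1+ε)) := by
    intro n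
    have h1 := gk_exp_bound ε (t * ((n:ℝ)+1)) hε hε1 (by positivity)
    have e1 : Complex.I * ((t * ((n:ℝ)+1) : ℝ) : ℂ) = Complex.I * t * ((n:ℂ)+1) := by
      push_cast; ring
    rw [e1] at h1
    rw [norm_mul, Complex.norm_real, Real.norm_eq_abs]
    have hm : (0:ℝ) < (n:ℝ)+1 := by positivity
    calc _ ≤ 3 * (t * ((n:ℝ)+1))^(2-ε) * (2 / ((n:ℝ)+1)^3) := by
          gcongr; exact gkq_bound n
      _ = _ := by
          rw [Real.mul_rpow ht.le hm.le]
          have e2 : ((n:ℝ)+1)^(2-ε) * ((n:ℝ)+1)^(1+ε) = ((n:ℝ)+1)^3 := by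
            rw [← Real.rpow_add hm, ← Real.rpow_natCast]
            congr 1; push_cast; ring
          have hpos : 0 < ((n:ℝ)+1)^(1+ε) := Real.rpow_pos_of_pos hm _
          rw [← e2]
          have hpos2 : 0 < ((n:ℝ)+1)^(2-ε) := Real.rpow_pos_of_pos hm _
          field_simp
          norm_num
  have hbs : Summable (fun n : ℕ => 6 * t^(2-ε) * (1 / ((n:ℝ)+1)^(1+ε))) := hsum.mul_left _
  have hA := Summable.of_norm_bounded hbs hb
  have hG : HasSum (fun n : ℕ => Complex.I * t * (((n:ℂ)+1) * (gkq n : ℂ)))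
      (Complex.I * t * ((-Real.eulerMascheroniConstant : ℝ) : ℂ)) := by
    have := (Complex.hasSum_ofReal.2 gk_hasSum_gamma).mul_left (Complex.I * t)
    simpa using this
  refine ⟨_, gk_hs_congr (hA.hasSum.add hG) (fun n => by ring) rfl, ?_⟩
  · have := tsum_of_norm_bounded hbs.hasSum hb
    rw [tsum_mul_left] at this
    have e : ∀ z : ℂ, z + Complex.I * t * ((-Real.eulerMascheroniConstant : ℝ) : ℂ) + Complex.I * t * Real.eulerMascheroniConstant = z := by
      intro z; push_cast; ring
    rw [e]
    refine this.trans ?_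
    have : 0 < t^(2-ε) := Real.rpow_pos_of_pos ht _
    nlinarith

lemma gk_tele : HasSum (fun n : ℕ => (1 / ((n:ℝ)+1) - 1 / ((n:ℝ)+2))) 1 := by
  have hp : ∀ n : ℕ, (0:ℝ) ≤ 1 / ((n:ℝ)+1) - 1 / ((n:ℝ)+2) := by
    intro n
    rw [sub_nonneg]
    apply one_div_le_one_div_of_le (by positivity); linarith
  rw [hasSum_iff_tendsto_nat_of_nonneg hp]
  have : ∀ N : ℕ, ∑ n ∈ Finset.range N, (1 / ((n:ℝ)+1) - 1 / ((n:ℝ)+2)) = 1 - 1/((N:ℝ)+1) := by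
    intro N
    induction N with
    | zero => simp
    | succ N ih => rw [Finset.sum_range_succ, ih]; push_cast; ring
  simp_rw [this]
  simpa using (tendsto_one_div_add_atTop_nhds_zero_nat (𝕜 := ℝ)).const_sub 1

lemma gk_inside (w : ℂ) (hw : ‖w‖ < 1) (hw0 : w ≠ 0) :
    HasSum (fun n : ℕ => w^(n+1) * (1 / ((n:ℂ)+1) - 1 / ((n:ℂ)+2)))
      (-Complex.log (1 - w) * (1 - 1/w) + 1) := by
  have h := Complex.hasSum_taylorSeries_neg_log hw
  have h1 := (hasSum_nat_add_iff' 1).2 h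
  have h2 := ((hasSum_nat_add_iff' 2).2 h).mul_left (1/w)
  have h3 := h1.sub h2
  refine gk_hs_congr h3 (fun n => ?_) ?_
  · push_cast
    field_simp
    try ring
  · simp [Finset.sum_range_succ]
    field_simp
    ring

lemma gk_first (z : ℂ) (hz : ‖z‖ = 1) (hz1 : z ≠ 1) :
    HasSum (fun n : ℕ => (z^(n+1) - 1) * ((1 / ((n:ℝ)+1) - 1 / ((n:ℝ)+2) : ℝ) : ℂ))
      (-Complex.log (1 - z) * (1 - 1/z)) := by
  have hz0 : z ≠ 0 := by
    intro h; simp [h] at hz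
  have hp : ∀ n : ℕ, (0:ℝ) ≤ 1 / ((n:ℝ)+1) - 1 / ((n:ℝ)+2) := by
    intro n
    rw [sub_nonneg]
    apply one_div_le_one_div_of_le (by positivity); linarith
  have hslit : 1 - z ∈ Complex.slitPlane := by
    rw [Complex.mem_slitPlane_iff]
    by_contra hcon
    push Not at hcon
    obtain ⟨h1, h2⟩ := hcon
    simp at h1 h2
    have h3 : z.re ^2 + z.im^2 = 1 := by
      have := Complex.sq_norm z
      rw [hz, Complex.normSq_apply] at this
      nlinarith
    rw [h2] at h3
    apply hz1
    apply Complex.ext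
    · simp; nlinarith
    · simp [h2]
  have hnorm : ∀ (n : ℕ) (w : ℂ), ‖w‖ ≤ 1 → ‖w^(n+1) * ((1 / ((n:ℝ)+1) - 1 / ((n:ℝ)+2) : ℝ) : ℂ)‖ ≤ 1 / ((n:ℝ)+1) - 1 / ((n:ℝ)+2) := by
    intro n w hw
    rw [norm_mul, norm_pow, Complex.norm_real, Real.norm_eq_abs, abs_of_nonneg (hp n)]
    exact mul_le_of_le_one_left (hp n) (pow_le_one₀ (norm_nonneg _) hw)
  have hS : Summable (fun n : ℕ => z^(n+1) * ((1 / ((n:ℝ)+1) - 1 / ((n:ℝ)+2) : ℝ) : ℂ)) :=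
    Summable.of_norm_bounded gk_tele.summable (fun n => hnorm n z hz.le)
  have hT := tendsto_tsum_of_dominated_convergence (𝓕 := nhdsWithin (1:ℝ) (Set.Iio 1))
    (f := fun (r : ℝ) (n : ℕ) => ((r:ℂ) * z)^(n+1) * ((1 / ((n:ℝ)+1) - 1 / ((n:ℝ)+2) : ℝ) : ℂ))
    (g := fun (n : ℕ) => z^(n+1) * ((1 / ((n:ℝ)+1) - 1 / ((n:ℝ)+2) : ℝ) : ℂ))
    gk_tele.summable ?_ ?_
  rotate_left
  · intro n
    refine Filter.Tendsto.mono_left ?_ nhdsWithin_le_nhds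
    have : ContinuousAt (fun r : ℝ => ((r:ℂ) * z)^(n+1) * ((1 / ((n:ℝ)+1) - 1 / ((n:ℝ)+2) : ℝ) : ℂ)) 1 := by
      fun_prop
    simpa [ContinuousAt] using this
  · filter_upwards [Ioo_mem_nhdsLT (show (0:ℝ) < 1 by norm_num)] with r hr n
    apply hnorm
    rw [norm_mul, hz, Complex.norm_real, Real.norm_eq_abs, abs_of_pos hr.1]
    linarith [hr.2]
  have hT2 : Filter.Tendsto (fun r : ℝ => ∑' n : ℕ, ((r:ℂ) * z)^(n+1) * ((1 / ((n:ℝ)+1) - 1 / ((n:ℝ)+2) : ℝ) : ℂ))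
      (nhdsWithin (1:ℝ) (Set.Iio 1)) (nhds (-Complex.log (1 - z) * (1 - 1/z) + 1)) := by
    have hc : ContinuousAt (fun r : ℝ => -Complex.log (1 - (r:ℂ) * z) * (1 - 1/((r:ℂ) * z)) + 1) 1 := by
      have c1 : ContinuousAt (fun r : ℝ => (r:ℂ) * z) 1 := by fun_prop
      have c2 : ContinuousAt (fun r : ℝ => Complex.log (1 - (r:ℂ) * z)) 1 :=
        (continuousAt_const.sub c1).clog (by simpa using hslit)
      have c3 : ContinuousAt (fun r : ℝ => 1/((r:ℂ) * z)) 1 :=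
        continuousAt_const.div c1 (by simpa using hz0)
      exact (c2.neg.mul (continuousAt_const.sub c3)).add continuousAt_const
    have hc' := hc.tendsto.mono_left (nhdsWithin_le_nhds (s := Set.Iio 1))
    simp only [Complex.ofReal_one, one_mul] at hc'
    refine hc'.congr' ?_
    filter_upwards [Ioo_mem_nhdsLT (show (0:ℝ) < 1 by norm_num)] with r hr
    have hi := gk_inside ((r:ℂ) * z) (by
      rw [norm_mul, hz, Complex.norm_real, Real.norm_eq_abs, abs_of_pos hr.1]
      linarith [hr.2]) (mul_ne_zero (by exact_mod_cast hr.1.ne') hz0)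
    rw [← hi.tsum_eq]
    congr 1
    funext n
    push_cast
    rfl
  have heq := tendsto_nhds_unique hT hT2
  have h1 := hS.hasSum
  rw [heq] at h1
  have h2 := h1.sub (Complex.hasSum_ofReal.2 gk_tele)
  refine gk_hs_congr h2 (fun n => ?_) ?_
  · simp [sub_mul]
  · simp

lemma gk_log_asymp (t : ℝ) (ht : 0 < t) (ht1 : t ≤ 1/2) :
    ‖Complex.log (1 - Complex.exp (Complex.I * t)) - (Real.log t - Real.pi * Complex.I / 2)‖ ≤ 3/2 * t := by
  have htc : (t:ℂ) ≠ 0 := by exact_mod_cast ht.ne'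
  have hn : ‖Complex.I * (t:ℂ)‖ = t := by simp [abs_of_pos ht]
  set u : ℂ := (Complex.exp (Complex.I * t) - 1 - Complex.I * t) / (Complex.I * t) with hu
  have hI : Complex.I * (t:ℂ) ≠ 0 := mul_ne_zero Complex.I_ne_zero htc
  have hub : ‖u‖ ≤ t := by
    rw [hu, norm_div, hn, div_le_iff₀ ht]
    have := Complex.norm_exp_sub_one_sub_id_le (x := Complex.I * t) (by rw [hn]; linarith)
    rw [hn] at this
    linarith
  have e : 1 - Complex.exp (Complex.I * t) = (t:ℂ) * (-Complex.I * (1 + u)) := by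
    rw [hu]; field_simp; ring
  have hre : 0 < (1+u).re := by
    have := (abs_le.1 ((Complex.abs_re_le_norm u).trans hub)).1
    simp; linarith
  have h1u : 1 + u ≠ 0 := by
    intro h; rw [h] at hre; simp at hre
  have harg : |(1+u).arg| < Real.pi/2 := Complex.abs_arg_lt_pi_div_two_iff.2 (Or.inl hre)
  rw [abs_lt] at harg
  rw [e, Complex.log_ofReal_mul ht (mul_ne_zero (neg_ne_zero.2 Complex.I_ne_zero) h1u),
    Complex.log_mul (neg_ne_zero.2 Complex.I_ne_zero) h1u, Complex.log_neg_I]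
  · have e2 : (Real.log t : ℂ) + (-((Real.pi:ℂ) / 2) * Complex.I + Complex.log (1+u)) - (Real.log t - Real.pi * Complex.I / 2)
      = Complex.log (1+u) := by ring
    rw [e2]
    have := Complex.norm_log_one_add_half_le_self (z := u) (by linarith)
    linarith
  · rw [Complex.arg_neg_I]
    constructor <;> linarith [Real.pi_pos]

lemma gk_first_asymp (t : ℝ) (ht : 0 < t) (ht1 : t ≤ 1/2) :
    ‖-Complex.log (1 - Complex.exp (Complex.I * t)) * (1 - 1/Complex.exp (Complex.I * t))
      + Complex.I * t * (Real.log t - Real.pi * Complex.I / 2)‖ ≤ t^2 * (|Real.log t| + 5) := by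
  set l := Complex.log (1 - Complex.exp (Complex.I * t)) with hl
  set m : ℂ := (Real.log t - Real.pi * Complex.I / 2) with hm
  have h := gk_log_asymp t ht ht1
  rw [← hl, ← hm] at h
  have e : (1:ℂ)/Complex.exp (Complex.I * t) = Complex.exp (-(Complex.I * t)) := by
    rw [Complex.exp_neg, one_div]
  rw [e]
  have hn : ‖-(Complex.I * (t:ℂ))‖ = t := by simp [abs_of_pos ht]
  have hn' : ‖(Complex.I * (t:ℂ))‖ = t := by simp [abs_of_pos ht]
  have h2 := Complex.norm_exp_sub_one_sub_id_le (x := -(Complex.I * t)) (by rw [hn]; linarith)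
  rw [hn] at h2
  have hmn : ‖m‖ ≤ |Real.log t| + 2 := by
    have := norm_sub_le (Real.log t : ℂ) (Real.pi * Complex.I / 2)
    rw [← hm, Complex.norm_real, Real.norm_eq_abs] at this
    have h3 : ‖(Real.pi * Complex.I / 2 : ℂ)‖ = Real.pi/2 := by
      simp [abs_of_pos Real.pi_pos]
    linarith [Real.pi_le_four]
  have hln : ‖l‖ ≤ |Real.log t| + 3 := by
    have : ‖l‖ ≤ ‖l - m‖ + ‖m‖ := by simpa using norm_add_le (l-m) m
    linarith
  have e3 : -l * (1 - Complex.exp (-(Complex.I * t))) + Complex.I * t * m =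
    l * (Complex.exp (-(Complex.I * t)) - 1 - -(Complex.I * t)) - (Complex.I * t) * (l - m) := by ring
  rw [e3]
  refine (norm_sub_le _ _).trans ?_
  rw [norm_mul, norm_mul, hn']
  calc _ ≤ (|Real.log t| + 3) * t^2 + t * (3/2*t) := by gcongr
    _ ≤ _ := by nlinarith [sq_nonneg t]

lemma gk_floor (n : ℕ) (x : ℝ) (hx : x ∈ Set.Ioc (1/((n:ℝ)+2)) (1/((n:ℝ)+1))) :
    ⌊1/x⌋ = (n:ℤ) + 1 := by
  have hx0 : 0 < x := lt_trans (by positivity) hx.1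
  rw [Int.floor_eq_iff]
  push_cast
  constructor
  · rw [le_div_iff₀ hx0]
    have := hx.2
    rw [le_div_iff₀ (by positivity)] at this
    linarith
  · rw [div_lt_iff₀ hx0]
    have := hx.1
    rw [div_lt_iff₀ (by positivity)] at this
    linarith

lemma gk_union : (⋃ n : ℕ, Set.Ioc (1/((n:ℝ)+2)) (1/((n:ℝ)+1))) = Set.Ioc 0 1 := by
  ext x
  simp only [Set.mem_iUnion]
  constructor
  · rintro ⟨n, h1, h2⟩
    refine ⟨lt_trans (by positivity) h1, h2.trans ?_⟩
    rw [div_le_one (by positivity)]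
    linarith [(Nat.cast_nonneg n : (0:ℝ) ≤ n)]
  · rintro ⟨h1, h2⟩
    have hf : 1 ≤ ⌊1/x⌋₊ := by
      rw [Nat.one_le_floor_iff, le_div_iff₀ h1]; linarith
    obtain ⟨n, hn⟩ := Nat.exists_eq_add_of_le' hf
    have ha := Nat.floor_le (show 0 ≤ 1/x by positivity)
    have hb := Nat.lt_floor_add_one (1/x)
    rw [hn] at ha hb
    push_cast at ha hb
    refine ⟨n, ?_, ?_⟩
    · rw [div_lt_iff₀ (by positivity)]
      rw [div_lt_iff₀ h1] at hb
      linarith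
    · rw [le_div_iff₀ (by positivity)]
      rw [le_div_iff₀ h1] at ha
      linarith

lemma gk_piece (n : ℕ) : ∫ x in Set.Ioc (1/((n:ℝ)+2)) (1/((n:ℝ)+1)), (1 + x)⁻¹ = gkL n - gkL (n+1) := by
  have hle : 1/((n:ℝ)+2) ≤ 1/((n:ℝ)+1) := by
    apply one_div_le_one_div_of_le (by positivity); linarith
  rw [← intervalIntegral.integral_of_le hle]
  rw [intervalIntegral.integral_comp_add_left (fun x => x⁻¹) 1, integral_inv_of_pos (by positivity) (by positivity),
    Real.log_div (by positivity) (by positivity)]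
  unfold gkL
  push_cast
  rw [show (n:ℝ)+1+1 = n+2 by ring]

lemma gk_integral (t : ℝ) :
    HasSum (fun n : ℕ => (Complex.exp (Complex.I * t * ((n:ℂ)+1)) - 1) * ((gkL n - gkL (n+1) : ℝ) : ℂ))
     ((Real.log 2 : ℂ) * ∫ x, (Complex.exp (Complex.I * (t : ℂ) * (⌊1 / x⌋ : ℂ)) - 1) ∂gaussMeasure) := by
  have hl2 : 0 < Real.log 2 := Real.log_pos (by norm_num)
  unfold gaussMeasure
  rw [integral_withDensity_eq_integral_toReal_smul (by fun_prop) (by simp),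
    ← integral_Ioc_eq_integral_Ioo, ← integral_const_mul]
  have e1 : ∫ x in Set.Ioc (0:ℝ) 1, (Real.log 2 : ℂ) * ((ENNReal.ofReal (1 / ((1 + x) * Real.log 2))).toReal • (Complex.exp (Complex.I * (t : ℂ) * (⌊1 / x⌋ : ℂ)) - 1))
    = ∫ x in Set.Ioc (0:ℝ) 1, (Complex.exp (Complex.I * (t : ℂ) * (⌊1 / x⌋ : ℂ)) - 1) * (((1+x)⁻¹ : ℝ) : ℂ) := by
    refine setIntegral_congr_fun measurableSet_Ioc ?_
    intro x hx
    have h1 : 0 < 1 + x := by linarith [hx.1]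
    have h1' : (1 + x : ℂ) ≠ 0 := by exact_mod_cast h1.ne'
    have h2' : (Real.log 2 : ℂ) ≠ 0 := by exact_mod_cast hl2.ne'
    simp only
    rw [ENNReal.toReal_ofReal (by positivity), Complex.real_smul]
    push_cast
    field_simp
  rw [e1, ← gk_union]
  have hmeas : Measurable (fun x : ℝ => (Complex.exp (Complex.I * (t : ℂ) * (⌊1 / x⌋ : ℂ)) - 1) * (((1+x)⁻¹ : ℝ) : ℂ)) := by
    have : Measurable (fun x : ℝ => (⌊1/x⌋ : ℂ)) :=
      (measurable_from_top (f := fun n : ℤ => (n:ℂ))).comp (Int.measurable_floor.comp (by fun_prop))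
    fun_prop
  have hint : IntegrableOn (fun x : ℝ => (Complex.exp (Complex.I * (t : ℂ) * (⌊1 / x⌋ : ℂ)) - 1) * (((1+x)⁻¹ : ℝ) : ℂ))
      (⋃ n : ℕ, Set.Ioc (1/((n:ℝ)+2)) (1/((n:ℝ)+1))) volume := by
    rw [gk_union]
    refine IntegrableOn.of_bound (C := 2) (by simp) hmeas.aestronglyMeasurable ?_
    refine (ae_restrict_iff' measurableSet_Ioc).2 (Filter.Eventually.of_forall ?_)
    intro x hx
    rw [norm_mul, Complex.norm_real, Real.norm_eq_abs]
    have h1 : 1 ≤ 1 + x := by linarith [hx.1]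
    rw [abs_of_nonneg (by positivity)]
    have h3 := norm_sub_le (Complex.exp (Complex.I * (t : ℂ) * (⌊1 / x⌋ : ℂ))) 1
    have h4 : ‖Complex.exp (Complex.I * (t : ℂ) * (⌊1 / x⌋ : ℂ))‖ = 1 := by
      have := Complex.norm_exp_I_mul_ofReal (t * (⌊1/x⌋:ℝ))
      push_cast at this
      rwa [← mul_assoc] at this
    rw [h4, norm_one] at h3
    have h5 : (1+x)⁻¹ ≤ 1 := inv_le_one_of_one_le₀ h1
    calc _ ≤ (1+1) * (1:ℝ) := by gcongr
      _ = 2 := by norm_num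
  have hS := hasSum_integral_iUnion (fun n => measurableSet_Ioc) ?_ hint
  · refine gk_hs_congr hS (fun n => ?_) rfl
    rw [← gk_piece, ← integral_complex_ofReal, ← integral_const_mul]
    refine setIntegral_congr_fun measurableSet_Ioc ?_
    intro x hx
    simp only
    rw [gk_floor n x hx]
    push_cast
    rfl
  · intro i j hij
    refine Set.disjoint_left.2 ?_
    intro x hi hj
    have := (gk_floor i x hi).symm.trans (gk_floor j x hj)
    omega

lemma gk_main (ε : ℝ) (hε : 0 < ε) (hε1 : ε < 1) : ∃ C > (0:ℝ), ∀ t : ℝ,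
    0 < t → t < 1/2 →
    ‖(∫ x, (Complex.exp (Complex.I * (t : ℂ) * (⌊1 / x⌋ : ℂ)) - 1) ∂gaussMeasure) -
        (-(Complex.I * (t : ℂ) / (Real.log 2 : ℂ)) *
          ((Real.log t : ℂ) + (Real.eulerMascheroniConstant : ℂ) -
            (Real.pi : ℂ) * Complex.I / 2))‖ ≤
      C * t ^ (2 - ε) := by
  have hl2 : 0 < Real.log 2 := Real.log_pos (by norm_num)
  have h2' : (Real.log 2 : ℂ) ≠ 0 := by exact_mod_cast hl2.ne'
  obtain ⟨C, hC, h⟩ := gk_second ε hε hε1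
  refine ⟨(1/ε + 5 + C) / Real.log 2, by positivity, ?_⟩
  intro t ht ht1
  obtain ⟨S, hS, hSb⟩ := h t ht
  have hI := gk_integral t
  set J := ∫ x, (Complex.exp (Complex.I * (t : ℂ) * (⌊1 / x⌋ : ℂ)) - 1) ∂gaussMeasure
  set z := Complex.exp (Complex.I * t) with hz
  have hF := gk_first z (Complex.norm_exp_I_mul_ofReal t) (by
    intro h1
    rw [hz, Complex.exp_eq_one_iff] at h1
    obtain ⟨n, hn⟩ := h1
    have h3 : (t:ℂ) = n * (2 * Real.pi) := by
      have : Complex.I * t = Complex.I * (n * (2 * Real.pi)) := by rw [hn]; ring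
      exact mul_left_cancel₀ Complex.I_ne_zero this
    have h4 : t = n * (2 * Real.pi) := by exact_mod_cast h3
    have hpi := Real.pi_gt_three
    have hn0 : (0:ℝ) < n := by
      by_contra hc
      push Not at hc
      nlinarith
    have hn1 : (1:ℝ) ≤ n := by exact_mod_cast (by exact_mod_cast hn0 : (0:ℤ) < n)
    nlinarith)
  have hA := gk_first_asymp t ht ht1.le
  rw [← hz] at hA
  have hsum : (Real.log 2 : ℂ) * J = -Complex.log (1 - z) * (1 - 1/z) + S := by
    refine hI.unique ?_
    refine gk_hs_congr (hF.add hS) (fun n => ?_) rfl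
    have : Complex.exp (Complex.I * t * ((n:ℂ)+1)) = z^(n+1) := by
      rw [hz, ← Complex.exp_nat_mul]
      congr 1; push_cast; ring
    rw [this]
    unfold gkq
    push_cast
    ring
  have hJ : J = (-Complex.log (1 - z) * (1 - 1/z) + S) / Real.log 2 := by
    rw [← hsum]; field_simp
  have e : J - (-(Complex.I * (t : ℂ) / (Real.log 2 : ℂ)) *
          ((Real.log t : ℂ) + (Real.eulerMascheroniConstant : ℂ) -
            (Real.pi : ℂ) * Complex.I / 2)) =
      ((-Complex.log (1 - z) * (1 - 1/z) + Complex.I * t * (Real.log t - Real.pi * Complex.I / 2))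
        + (S + Complex.I * t * Real.eulerMascheroniConstant)) / Real.log 2 := by
    rw [hJ]; ring
  rw [e, norm_div, Complex.norm_real, Real.norm_eq_abs, abs_of_pos hl2, div_mul_eq_mul_div]
  gcongr
  refine (norm_add_le _ _).trans ?_
  have hlog : |Real.log t| ≤ t^(-ε) / ε := by
    rw [abs_of_nonpos (Real.log_nonpos ht.le (by linarith)), ← Real.log_inv, Real.rpow_neg ht.le, ← Real.inv_rpow ht.le]
    exact Real.log_le_rpow_div (by positivity) hε
  have h1 : 1 ≤ t^(-ε) := Real.one_le_rpow_of_pos_of_le_one_of_nonpos ht (by linarith) (by linarith)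
  have h2 : t^(2-ε) = t^2 * t^(-ε) := by
    rw [← Real.rpow_two, ← Real.rpow_add ht]; rfl
  have h3 : t^2 * (|Real.log t| + 5) ≤ t^2 * (t^(-ε)/ε + 5 * t^(-ε)) := by
    gcongr; linarith
  have h4 : t^2 * (t^(-ε)/ε + 5 * t^(-ε)) = (1/ε + 5) * t^(2-ε) := by rw [h2]; ring
  linarith

theorem stmt_15 (ε : ℝ) (hε : 0 < ε) : ∃ C > (0:ℝ), ∃ t₀ > (0:ℝ), ∀ t : ℝ,
    0 < t → t < t₀ →
    ‖(∫ x, (Complex.exp (Complex.I * (t : ℂ) * (⌊1 / x⌋ : ℂ)) - 1) ∂gaussMeasure) -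
        (-(Complex.I * (t : ℂ) / (Real.log 2 : ℂ)) *
          ((Real.log t : ℂ) + (Real.eulerMascheroniConstant : ℂ) -
            (Real.pi : ℂ) * Complex.I / 2))‖ ≤
      C * t ^ (2 - ε) := by
  obtain ⟨C, hC, h⟩ := gk_main (min ε (1/2)) (lt_min hε (by norm_num))
    (lt_of_le_of_lt (min_le_right _ _) (by norm_num))
  refine ⟨C, hC, 1/2, by norm_num, fun t ht ht1 => (h t ht ht1).trans ?_⟩
  have : t ^ (2 - min ε (1/2)) ≤ t ^ (2 - ε) :=
    Real.rpow_le_rpow_of_exponent_ge ht (by linarith) (by linarith [min_le_left ε (1/2)])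
  gcongr
end

section
/- For the Gauss–Kuzmin measure μ, the function φ(x) = ⌊1/x⌋ − ⌊1/T(x)⌋ (where T is the Gauss map) satisfies ∫₀¹ (e^{itφ(x)} − 1) dμ(x) = −(π/log 2)·t + O(t² (log t)²) as t → 0⁺. -/
open MeasureTheory

noncomputable def gaussMap (x : ℝ) : ℝ := Int.fract (1 / x)

namespace GK

lemma log2_lo : (1:ℝ)/2 < Real.log 2 := by have := Real.log_two_gt_d9; linarith
lemma log2_hi : Real.log 2 < 1 := by have := Real.log_two_lt_d9; linarith

lemma gm_Ioo {c d : ℝ} (hc : 0 ≤ c) (hcd : c ≤ d) (hd : d ≤ 1) :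
    gaussMeasure (Set.Ioo c d) =
      ENNReal.ofReal ((Real.log (1 + d) - Real.log (1 + c)) / Real.log 2) := by
  have hl := log2_lo
  have hsub : Set.Ioo c d ∩ Set.Ioo 0 1 = Set.Ioo c d :=
    Set.inter_eq_left.2 (Set.Ioo_subset_Ioo hc hd)
  unfold gaussMeasure
  rw [withDensity_apply _ measurableSet_Ioo, Measure.restrict_restrict measurableSet_Ioo, hsub]
  have hcont : ContinuousOn (fun x : ℝ => 1 / ((1 + x) * Real.log 2)) (Set.Icc c d) := by
    apply ContinuousOn.div (by fun_prop) (by fun_prop)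
    intro x hx
    have : 0 < 1 + x := by linarith [hx.1]
    positivity
  rw [← ofReal_integral_eq_lintegral_ofReal]
  · congr 1
    rw [← integral_Ioc_eq_integral_Ioo, ← intervalIntegral.integral_of_le hcd]
    have := intervalIntegral.integral_eq_sub_of_hasDerivAt (a := c) (b := d)
      (f := fun x => Real.log (1 + x) / Real.log 2) (f' := fun x : ℝ => 1 / ((1 + x) * Real.log 2)) ?_ ?_
    · rw [this]; ring
    · intro x hx
      rw [Set.uIcc_of_le hcd] at hx
      have h1 : 0 < 1 + x := by linarith [hx.1]
      have := (((hasDerivAt_id x).const_add 1).log (by simpa using h1.ne')).div_const (Real.log 2)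
      refine HasDerivAt.congr_deriv this ?_
      simp only [id]; field_simp
    · apply ContinuousOn.intervalIntegrable
      rwa [Set.uIcc_of_le hcd]
  · exact (hcont.integrableOn_Icc).mono_set Set.Ioo_subset_Icc_self
  · filter_upwards [ae_restrict_mem measurableSet_Ioo] with x hx
    have h1 : 0 < 1 + x := by linarith [hx.1]
    show (0:ℝ) ≤ _
    positivity

lemma gm_ac : gaussMeasure ≪ volume :=
  (withDensity_absolutelyContinuous _ _).trans Measure.absolutelyContinuous_restrict 

lemma ae_mem : ∀ᵐ x ∂gaussMeasure, x ∈ Set.Ioo (0:ℝ) 1 :=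
  (withDensity_absolutelyContinuous _ _).ae_le (ae_restrict_mem measurableSet_Ioo)

lemma gm_sand {c d : ℝ} (hc : 0 ≤ c) (hcd : c ≤ d) (hd : d ≤ 1) (S : Set ℝ)
    (h1 : Set.Ioo c d ⊆ S) (h2 : S ∩ Set.Ioo 0 1 ⊆ Set.Icc c d) :
    gaussMeasure.real S = (Real.log (1 + d) - Real.log (1 + c)) / Real.log 2 := by
  have hl := log2_lo
  have hI : gaussMeasure (Set.Icc c d) = gaussMeasure (Set.Ioo c d) :=
    measure_congr (gm_ac.ae_eq Ioo_ae_eq_Icc.symm)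
  have hS : gaussMeasure S = gaussMeasure (Set.Ioo c d) := by
    apply le_antisymm
    · rw [← hI]
      apply measure_mono_ae
      filter_upwards [ae_mem] with x hx hxS
      exact h2 ⟨hxS, hx⟩
    · exact measure_mono h1
  rw [measureReal_def, hS, gm_Ioo hc hcd hd, ENNReal.toReal_ofReal]
  apply div_nonneg _ (by linarith)
  have := Real.log_le_log (by linarith : 0 < 1 + c) (by linarith : 1 + c ≤ 1 + d)
  linarith

instance : IsFiniteMeasure gaussMeasure := by
  refine ⟨?_⟩
  have : gaussMeasure Set.univ ≤ gaussMeasure (Set.Ioo 0 1) := by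
    apply measure_mono_ae
    filter_upwards [ae_mem] with x hx _ using hx
  refine this.trans_lt ?_
  rw [gm_Ioo le_rfl zero_le_one le_rfl]
  exact ENNReal.ofReal_lt_top

noncomputable def X (x : ℝ) : ℕ := ⌊1 / x⌋₊
noncomputable def Y (x : ℝ) : ℕ := ⌊1 / gaussMap x⌋₊

lemma mX : Measurable X := by
  unfold X; fun_prop
lemma mT : Measurable gaussMap := by
  unfold gaussMap
  exact measurable_fract.comp (measurable_const.div measurable_id)
lemma mY : Measurable Y := by
  unfold Y
  exact Nat.measurable_floor.comp (measurable_const.div mT)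

lemma X_iff {x : ℝ} (hx : 0 < x) {n : ℕ} (hn : n ≠ 0) :
    X x = n ↔ x ≤ 1 / n ∧ 1 / (n + 1) < x := by
  have hn' : (0:ℝ) < n := by positivity
  unfold X
  rw [Nat.floor_eq_iff' hn]
  constructor
  · rintro ⟨h1, h2⟩
    rw [le_div_iff₀ hx] at h1
    rw [div_lt_iff₀ hx] at h2
    rw [le_div_iff₀ hn', div_lt_iff₀ (by positivity)]
    constructor <;> linarith
  · rintro ⟨h1, h2⟩
    rw [le_div_iff₀ hn'] at h1
    rw [div_lt_iff₀ (by positivity)] at h2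
    rw [le_div_iff₀ hx, div_lt_iff₀ hx]
    constructor <;> linarith

lemma Y_iff {x : ℝ} {n : ℕ} (hn : n ≠ 0) :
    Y x = n ↔ gaussMap x ≤ 1 / n ∧ 1 / (n + 1) < gaussMap x := by
  rcases (Int.fract_nonneg (1 / x)).eq_or_lt with h | h
  · have h0 : gaussMap x = 0 := h.symm
    unfold Y
    rw [h0]
    have : (0:ℝ) < 1 / (n+1) := by positivity
    constructor
    · intro h; simp at h; exact absurd h.symm hn
    · intro h; linarith [h.2]
  · exact X_iff (x := gaussMap x) h hn

lemma T_eq {x : ℝ} (hx : 0 < x) {n : ℕ} (h : X x = n) : gaussMap x = 1 / x - n := by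
  unfold gaussMap Int.fract
  rw [← natCast_floor_eq_intCast_floor (by positivity)]
  unfold X at h
  rw [h]

noncomputable def q (n : ℕ) : ℝ := (Real.log (1 + 1 / n) - Real.log (1 + 1 / (n + 1))) / Real.log 2

lemma qX {n : ℕ} (hn : n ≠ 0) : gaussMeasure.real (X ⁻¹' {n}) = q n := by
  have hn1 : (1:ℝ) ≤ n := by exact_mod_cast Nat.one_le_iff_ne_zero.2 hn
  have h0 : (0:ℝ) < 1 / (n+1) := by positivity
  apply gm_sand h0.le
  · apply one_div_le_one_div_of_le <;> linarith
  · rw [div_le_one (by linarith)]; exact hn1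
  · intro x hx
    exact (X_iff (h0.trans hx.1) hn).2 ⟨hx.2.le, hx.1⟩
  · intro x hx
    have := (X_iff hx.2.1 hn).1 hx.1
    exact ⟨this.2.le, this.1⟩

noncomputable def p (n m : ℕ) : ℝ :=
  (Real.log (1 + 1 / (n + 1 / (m + 1))) - Real.log (1 + 1 / (n + 1 / m))) / Real.log 2

lemma pXY {n m : ℕ} (hn : n ≠ 0) (hm : m ≠ 0) :
    gaussMeasure.real (X ⁻¹' {n} ∩ Y ⁻¹' {m}) = p n m := by
  have hn1 : (1:ℝ) ≤ n := by exact_mod_cast Nat.one_le_iff_ne_zero.2 hn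
  have hm1 : (1:ℝ) ≤ m := by exact_mod_cast Nat.one_le_iff_ne_zero.2 hm
  have hu : (0:ℝ) < 1 / (m+1) := by positivity
  have huv : (1:ℝ) / (m+1) ≤ 1 / m := by apply one_div_le_one_div_of_le <;> linarith
  have hv : (1:ℝ) / m ≤ 1 := by rw [div_le_one (by linarith)]; exact hm1
  have hv0 : (0:ℝ) < 1 / m := by positivity
  apply gm_sand
  · positivity
  · apply one_div_le_one_div_of_le <;> linarith
  · rw [div_le_one (by positivity)]; linarith
  · intro x hx
    have hx0 : 0 < x := lt_trans (by positivity) hx.1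
    have e1 := hx.1
    have e2 := hx.2
    have e1' : 1 / x < n + 1 / m := by
      rw [div_lt_iff₀ (by positivity)] at e1
      rw [div_lt_iff₀ hx0]; linarith
    have e2' : n + 1 / (m + 1) < 1 / x := by
      rw [lt_div_iff₀ (by positivity)] at e2
      rw [lt_div_iff₀ hx0]; linarith
    have hX : X x = n := by
      unfold X
      rw [Nat.floor_eq_iff' hn]
      constructor <;> linarith
    refine ⟨hX, ?_⟩
    show Y x = m
    rw [Y_iff hm, T_eq hx0 hX]
    constructor <;> linarith
  · rintro x ⟨⟨hX, hY⟩, hx⟩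
    have hX : X x = n := hX
    have hY : Y x = m := hY
    rw [Y_iff hm, T_eq hx.1 hX] at hY
    have hx0 := hx.1
    constructor
    · rw [div_le_iff₀ (by positivity)]
      have : 1 / x ≤ n + 1 / m := by linarith
      rw [div_le_iff₀ hx0] at this
      linarith
    · rw [le_div_iff₀ (by positivity)]
      have : n + 1 / (m + 1) ≤ 1 / x := by linarith
      rw [le_div_iff₀ hx0] at this
      linarith

lemma X_pos {x : ℝ} (hx : x ∈ Set.Ioo (0:ℝ) 1) : X x ≠ 0 := by
  unfold X
  rw [← Nat.one_le_iff_ne_zero, Nat.one_le_floor_iff, one_le_div hx.1]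
  exact hx.2.le

lemma pXY0 (m : ℕ) : gaussMeasure.real (X ⁻¹' {0} ∩ Y ⁻¹' {m}) = 0 := by
  rw [measureReal_eq_zero_iff, measure_eq_zero_iff_ae_notMem]
  filter_upwards [ae_mem] with x hx h
  exact X_pos hx h.1

lemma p_nonneg {n m : ℕ} (hn : n ≠ 0) (hm : m ≠ 0) : 0 ≤ p n m := by
  rw [← pXY hn hm]; positivity

lemma qY {m : ℕ} (hm : m ≠ 0) : gaussMeasure.real (Y ⁻¹' {m}) = q m := by
  have hm1 : (1:ℝ) ≤ m := by exact_mod_cast Nat.one_le_iff_ne_zero.2 hm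
  have hU : Y ⁻¹' {m} = ⋃ n, (X ⁻¹' {n} ∩ Y ⁻¹' {m}) := by
    ext x; simp
  have hsum : HasSum (fun n => gaussMeasure.real (X ⁻¹' {n} ∩ Y ⁻¹' {m})) 
      (gaussMeasure.real (Y ⁻¹' {m})) := by
    have hmu : gaussMeasure (Y ⁻¹' {m}) = ∑' n, gaussMeasure (X ⁻¹' {n} ∩ Y ⁻¹' {m}) := by
      conv_lhs => rw [hU]
      apply measure_iUnion
      · intro i j hij
        rw [Function.onFun, Set.disjoint_left]
        rintro x ⟨h1, -⟩ ⟨h2, -⟩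
        exact hij (h1.symm.trans h2)
      · intro i
        exact (mX (measurableSet_singleton _)).inter (mY (measurableSet_singleton _))
    have hne : ∑' n, gaussMeasure (X ⁻¹' {n} ∩ Y ⁻¹' {m}) ≠ ⊤ := by
      rw [← hmu]; exact measure_ne_top _ _
    have := ENNReal.hasSum_toReal hne
    rw [← ENNReal.tsum_toReal_eq (fun n => measure_ne_top _ _), ← hmu] at this
    exact this
  apply hsum.unique
  rw [← hasSum_nat_add_iff' 1]
  simp only [Finset.sum_range_one, pXY0, sub_zero]
  rw [hasSum_iff_tendsto_nat_of_nonneg (fun _ => by positivity)]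
  have key : ∀ N : ℕ, ∑ i ∈ Finset.range N, gaussMeasure.real (X ⁻¹' {i+1} ∩ Y ⁻¹' {m})
      = q m - (Real.log (1 + (1/(m:ℝ) - 1/(m+1)) / (N + 1 + 1/(m+1)))) / Real.log 2 := by
    intro N
    have hl := log2_lo
    have hv0 : (0:ℝ) < m := by positivity
    have e3 : (1:ℝ) + 1 / m = (m + 1) / m := by field_simp
    have e4 : (1:ℝ) + 1 / (m+1) = (m + 2) / (m+1) := by field_simp; ring
    induction N with
    | zero =>
      simp only [Finset.range_zero, Finset.sum_empty, q]
      rw [← sub_div, eq_comm, div_eq_zero_iff]; left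
      have e5 : 1 + (1/(m:ℝ) - 1/(m+1)) / ((0:ℕ) + 1 + 1/(m+1)) = (m+1)^2/(m * (m+2)) := by
        have : (0:ℝ) + 1 + 1/(m+1) ≠ 0 := by positivity
        push_cast
        field_simp
        ring
      rw [e5, e3, e4]
      rw [Real.log_div, Real.log_div, Real.log_div, Real.log_mul, Real.log_pow] <;> try positivity
      push_cast; ring
    | succ N ih =>
      rw [Finset.sum_range_succ, ih, pXY (by omega) hm]
      unfold p
      have hN : (0:ℝ) ≤ N := by positivity
      have f1 : 1 + (1/(m:ℝ) - 1/(m+1)) / (N + 1 + 1/(m+1)) = (N+1+1/m)/(N+1+1/(m+1)) := by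
        field_simp; ring
      have f2 : 1 + (1/(m:ℝ) - 1/(m+1)) / ((N+1:ℕ) + 1 + 1/(m+1)) = (N+1+1+1/m)/(N+1+1+1/(m+1)) := by
        push_cast
        field_simp; ring
      have f3 : (1:ℝ) + 1 / ((N+1:ℕ) + 1 / (m+1)) = (N+1+1+1/(m+1))/(N+1+1/(m+1)) := by
        push_cast
        field_simp; ring
      have f4 : (1:ℝ) + 1 / ((N+1:ℕ) + 1 / m) = (N+1+1+1/m)/(N+1+1/m) := by
        push_cast
        field_simp; ring
      rw [f1, f2, f3, f4]
      rw [Real.log_div, Real.log_div, Real.log_div, Real.log_div] <;> try positivity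
      ring
  simp_rw [key]
  have : Filter.Tendsto (fun N : ℕ => (1/(m:ℝ) - 1/(m+1)) / (N + 1 + 1/(m+1))) Filter.atTop (nhds 0) := by
    apply Filter.Tendsto.const_div_atTop
    simp_rw [add_assoc]
    exact Filter.tendsto_atTop_add_const_right _ _ tendsto_natCast_atTop_atTop
  have h2 := (((this.const_add 1).log (by norm_num)).div_const (Real.log 2)).const_sub (q m)
  simpa using h2

lemma p_le {n m : ℕ} (hn : n ≠ 0) (hm : m ≠ 0) : p n m ≤ 2 * (1 / (n:ℝ)^2) * (1 / (m:ℝ)^2) := by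
  have hn1 : (1:ℝ) ≤ n := by exact_mod_cast Nat.one_le_iff_ne_zero.2 hn
  have hm1 : (1:ℝ) ≤ m := by exact_mod_cast Nat.one_le_iff_ne_zero.2 hm
  have hl := log2_lo
  have hu : (0:ℝ) < 1 / (m+1) := by positivity
  have hv0 : (0:ℝ) < 1 / m := by positivity
  have huv : (1:ℝ) / (m+1) ≤ 1 / m := by apply one_div_le_one_div_of_le <;> linarith
  set u : ℝ := 1 / (m+1) with hud
  set v : ℝ := 1 / (m:ℝ) with hvd
  have hvu : v - u ≤ 1 / (m:ℝ)^2 := by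
    have : v - u = 1 / (m * (m+1)) := by rw [hud, hvd]; field_simp; ring
    rw [this]
    apply one_div_le_one_div_of_le (by positivity); nlinarith
  have h1 : Real.log (1 + 1 / (n + u)) - Real.log (1 + 1 / (n + v)) ≤ (v - u) * (1 / (n:ℝ)^2) := by
    rw [← Real.log_div (by positivity) (by positivity)]
    refine (Real.log_le_sub_one_of_pos (by positivity)).trans ?_
    have : (1 + 1 / (n + u)) / (1 + 1 / (n + v)) - 1 = (v - u) * (1 / ((n+u) * (n + 1 + v))) := by
      have : (n:ℝ) + v + 1 ≠ 0 := by positivity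
      have : (n:ℝ) + 1 + v ≠ 0 := by positivity
      field_simp; ring
    rw [this]
    apply mul_le_mul_of_nonneg_left _ (by linarith)
    apply one_div_le_one_div_of_le (by positivity)
    nlinarith
  unfold p
  rw [div_le_iff₀ (by linarith)]
  have h2 : (v - u) * (1 / (n:ℝ)^2) ≤ 1 / (m:ℝ)^2 * (1 / (n:ℝ)^2) :=
    mul_le_mul_of_nonneg_right hvu (by positivity)
  have h3 : 0 ≤ 1 / (m:ℝ)^2 * (1 / (n:ℝ)^2) := by positivity
  nlinarith

lemma q_bd {n : ℕ} (hn : n ≠ 0) : |1 / (n:ℝ)^2 - Real.log 2 * q n| ≤ 2 / (n:ℝ)^3 := by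
  have hn1 : (1:ℝ) ≤ n := by exact_mod_cast Nat.one_le_iff_ne_zero.2 hn
  have hl := log2_lo
  have e : Real.log 2 * q n = Real.log ((n+1)^2 / (n * (n+2))) := by
    unfold q
    rw [mul_div_cancel₀ _ (by linarith), ← Real.log_div (by positivity) (by positivity)]
    congr 1
    field_simp; ring
  rw [e]
  have h1 := Real.log_le_sub_one_of_pos (show (0:ℝ) < (n+1)^2 / (n * (n+2)) by positivity)
  have h2 := Real.one_sub_inv_le_log_of_pos (show (0:ℝ) < (n+1)^2 / (n * (n+2)) by positivity)
  have e1 : ((n:ℝ)+1)^2 / (n * (n+2)) - 1 = 1 / (n * (n+2)) := by field_simp; ring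
  have e2 : 1 - (((n:ℝ)+1)^2 / (n * (n+2)))⁻¹ = 1 / ((n:ℝ)+1)^2 := by field_simp; ring
  rw [e1] at h1
  rw [e2] at h2
  have h3 : 1 / ((n:ℝ) * (n+2)) ≤ 1 / (n:ℝ)^2 := by
    apply one_div_le_one_div_of_le (by positivity); nlinarith
  have h4 : 1 / (n:ℝ)^2 - 1 / ((n:ℝ)+1)^2 ≤ 2 / (n:ℝ)^3 := by
    rw [div_sub_div _ _ (by positivity) (by positivity), div_le_div_iff₀ (by positivity) (by positivity)]
    have : (n:ℝ)^2 * (2 * (n^2 * (n+1)^2) - (2*n+1) * n^3) ≥ 0 := by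
      apply mul_nonneg (by positivity)
      have : 2 * ((n:ℝ)^2 * (n+1)^2) - (2*n+1) * n^3 = 3 * n^3 + 2*n^2 := by ring
      rw [this]; positivity
    have h5 : (n:ℝ)^3 > 0 := by positivity
    nlinarith
  rw [abs_le]; constructor
  · have : 0 ≤ 2 / (n:ℝ)^3 := by positivity
    linarith
  · linarith

noncomputable def s (t : ℝ) (n : ℕ) : ℝ := min 2 (t * n) / (n:ℝ)^2

lemma s_nonneg {t : ℝ} (ht : 0 < t) (n : ℕ) : 0 ≤ s t n := by
  unfold s; positivity

lemma log_ge {t : ℝ} (ht : 0 < t) (h : t < 1/3) : 1 ≤ |Real.log t| := by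
  have h1 : Real.log t ≤ -1 := by
    rw [Real.log_le_iff_le_exp ht]
    have := Real.exp_one_lt_d9
    rw [Real.exp_neg]
    have h3 : (1:ℝ)/3 ≤ (Real.exp 1)⁻¹ := by
      rw [← one_div]
      apply one_div_le_one_div_of_le (Real.exp_pos _); linarith
    linarith
  rw [abs_of_neg (by linarith)]; linarith

lemma s_bound {t : ℝ} (ht : 0 < t) (h : t < 1/3) (M : ℕ) :
    ∑ i ∈ Finset.range M, s t i ≤ 10 * t * |Real.log t| := by
  have hL := log_ge ht h
  set N := ⌈1 / t⌉₊ with hN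
  have hN1 : 1 / t ≤ N := Nat.le_ceil _
  have hN2 : (N:ℝ) < 1 / t + 1 := Nat.ceil_lt_add_one (by positivity)
  have hN0 : (0:ℝ) < N := lt_of_lt_of_le (by positivity) hN1
  have hsub : Finset.range M ⊆ Finset.range (N+1) ∪ Finset.Ioo N M := by
    intro i hi
    simp only [Finset.mem_union, Finset.mem_range, Finset.mem_Ioo] at hi ⊢
    omega
  have hdis : Disjoint (Finset.range (N+1)) (Finset.Ioo N M) := by
    rw [Finset.disjoint_left]
    intro i hi
    simp only [Finset.mem_range, Finset.mem_Ioo] at hi ⊢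
    omega
  have h1 : ∑ i ∈ Finset.range (N+1), s t i ≤ t * (1 + Real.log N) := by
    rw [Finset.sum_range_succ']
    have h0 : s t 0 = 0 := by simp [s]
    rw [h0, add_zero]
    have hh := harmonic_le_one_add_log N
    refine le_trans ?_ (mul_le_mul_of_nonneg_left hh ht.le)
    unfold harmonic
    push_cast
    rw [Finset.mul_sum]
    apply Finset.sum_le_sum
    intro i _
    unfold s
    push_cast
    have hi : (0:ℝ) < i + 1 := by positivity
    rw [div_le_iff₀ (by positivity)]
    refine (min_le_right _ _).trans (le_of_eq ?_)
    field_simp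
  have h2 : ∑ i ∈ Finset.Ioo N M, s t i ≤ 2 * (2 / (N + 1)) := by
    refine le_trans ?_ (mul_le_mul_of_nonneg_left (sum_Ioo_inv_sq_le N M) zero_le_two)
    rw [Finset.mul_sum]
    apply Finset.sum_le_sum
    intro i _
    unfold s
    rw [div_eq_mul_inv]
    exact mul_le_mul_of_nonneg_right (min_le_left _ _) (by positivity)
  have h3 : 2 / ((N:ℝ) + 1) ≤ 2 * t := by
    rw [div_le_iff₀ (by positivity)]
    rw [div_le_iff₀ ht] at hN1
    nlinarith
  have h4 : Real.log N ≤ 1 + |Real.log t| := by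
    have : (N:ℝ) ≤ 2 / t := by
      have : 1 ≤ 1 / t := by rw [le_div_iff₀ ht]; linarith
      have e : 2 / t = 1 / t + 1 / t := by ring
      linarith
    refine (Real.log_le_log hN0 this).trans ?_
    rw [Real.log_div (by norm_num) ht.ne']
    have := log2_hi
    have := neg_abs_le (Real.log t)
    linarith
  have h5 := Finset.sum_le_sum_of_subset_of_nonneg hsub (f := s t) (fun i _ _ => s_nonneg ht i)
  rw [Finset.sum_union hdis] at h5
  have h6 : t * (1 + Real.log N) ≤ t * (3 * |Real.log t|) := 
    mul_le_mul_of_nonneg_left (by linarith) ht.le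
  have h7 : t * 1 ≤ t * |Real.log t| := mul_le_mul_of_nonneg_left hL ht.le
  linarith

lemma s_summable {t : ℝ} (ht : 0 < t) (h : t < 1/3) : Summable (s t) :=
  summable_of_sum_range_le (s_nonneg ht) (s_bound ht h)

lemma s_tsum {t : ℝ} (ht : 0 < t) (h : t < 1/3) : ∑' n, s t n ≤ 10 * t * |Real.log t| :=
  Real.tsum_le_of_sum_range_le (s_nonneg ht) (s_bound ht h)

lemma hasSum_congr2 {f g : ℕ → ℝ} {a b : ℝ} (h : HasSum f a) (hfg : ∀ n, g n = f n) (hab : b = a) :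
    HasSum g b := by
  rw [hab, funext hfg]; exact h

lemma cos_sum {t : ℝ} (ht : 0 < t) (h : t < 1/3) :
    HasSum (fun n : ℕ => (1 - Real.cos (t * n)) / (n:ℝ)^2) (Real.pi * t / 2 - t^2/4) := by
  have hpi := Real.pi_gt_three
  have hx : t / (2 * Real.pi) ∈ Set.Icc (0:ℝ) 1 := by
    constructor
    · positivity
    · rw [div_le_one (by positivity)]; linarith
  have h1 := hasSum_one_div_nat_pow_mul_cos (k := 1) one_ne_zero hx
  have h0 := hasSum_one_div_nat_pow_mul_cos (k := 1) one_ne_zero (x := 0) (by simp)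
  have hB : Polynomial.bernoulli 2 = Polynomial.X^2 - Polynomial.X + Polynomial.C (6⁻¹:ℚ) := by
    simp [Polynomial.bernoulli, Finset.sum_range_succ, ← Polynomial.C_mul_X_pow_eq_monomial]
    have : (Polynomial.C (-1/2 : ℚ)) * 2 = -1 := by
      rw [show (2 : Polynomial ℚ) = Polynomial.C 2 from rfl, ← Polynomial.C_mul]; norm_num
    linear_combination Polynomial.X * this
  have := h0.sub h1
  refine hasSum_congr2 this ?_ ?_
  · intro n
    have : 2 * Real.pi * n * (t / (2 * Real.pi)) = t * n := by field_simp
    rw [this]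
    simp; ring
  · simp [hB]
    field_simp
    ring

lemma one_sub_cos_le {y : ℝ} (hy : 0 ≤ y) : 1 - Real.cos y ≤ y * min 2 y := by
  rcases le_total 2 y with h | h
  · rw [min_eq_left h]; linarith [Real.neg_one_le_cos y]
  · rw [min_eq_right h]; nlinarith [Real.one_sub_sq_div_two_le_cos (x := y)]

lemma real_part {t : ℝ} (ht : 0 < t) (h : t < 1/3) :
    Summable (fun n : ℕ => q n * (2 * (Real.cos (t * n) - 1))) ∧ 
    |∑' n : ℕ, q n * (2 * (Real.cos (t * n) - 1)) - (-(Real.pi / Real.log 2) * t)| ≤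
      t^2 + 80 * t^2 * |Real.log t| := by
  have hl := log2_lo
  have hc := (cos_sum ht h).mul_left (2 / Real.log 2)
  set D : ℕ → ℝ := fun n => (2 / Real.log 2) * ((1 - Real.cos (t * n)) * (1 / (n:ℝ)^2 - Real.log 2 * q n)) with hD
  have hDb : ∀ n, ‖D n‖ ≤ 8 * t * s t n := by
    intro n
    rcases eq_or_ne n 0 with rfl | hn
    · simp [hD, s]
    have hn1 : (1:ℝ) ≤ n := by exact_mod_cast Nat.one_le_iff_ne_zero.2 hn
    have a1 := one_sub_cos_le (y := t * n) (by positivity)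
    have a0 : 0 ≤ 1 - Real.cos (t * n) := by linarith [Real.cos_le_one (t * n)]
    rw [hD, Real.norm_eq_abs, abs_mul, abs_mul, abs_of_nonneg a0, abs_of_nonneg (by positivity : 0 ≤ 2 / Real.log 2)]
    have a2 : 2 / Real.log 2 ≤ 4 := by rw [div_le_iff₀ (by linarith)]; linarith
    calc _ ≤ 4 * ((t * n * min 2 (t * n)) * (2 / (n:ℝ)^3)) := by
          gcongr
          exact q_bd hn
      _ = 8 * t * s t n := by
          unfold s; field_simp; ring
  have hsS := (s_summable ht h).mul_left (8 * t)
  have hDs : Summable D := Summable.of_norm_bounded hsS hDb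
  have hDt : |∑' n, D n| ≤ 80 * t^2 * |Real.log t| := by
    refine (tsum_of_norm_bounded hsS.hasSum hDb).trans ?_
    rw [tsum_mul_left]
    have := mul_le_mul_of_nonneg_left (s_tsum ht h) (by positivity : 0 ≤ 8 * t)
    linarith
  have hS := hDs.hasSum.sub hc
  have hfun : (fun n : ℕ => q n * (2 * (Real.cos (t * n) - 1))) = 
      fun n => D n - 2 / Real.log 2 * ((1 - Real.cos (t * n)) / (n:ℝ)^2) := by
    ext n
    simp only [hD]
    field_simp
    ring
  rw [← hfun] at hS
  refine ⟨hS.summable, ?_⟩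
  rw [hS.tsum_eq]
  have e : ∑' n, D n - 2 / Real.log 2 * (Real.pi * t / 2 - t ^ 2 / 4) - -(Real.pi / Real.log 2) * t
     = ∑' n, D n + t^2 * (1 / (2 * Real.log 2)) := by
    field_simp; ring
  rw [e]
  have a2 : 1 / (2 * Real.log 2) ≤ 1 := by rw [div_le_iff₀ (by linarith)]; linarith
  refine (abs_add_le _ _).trans ?_
  rw [abs_of_nonneg (by positivity : 0 ≤ t^2 * (1 / (2 * Real.log 2)))]
  have := mul_le_mul_of_nonneg_left a2 (by positivity : 0 ≤ t^2)
  linarith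

noncomputable def E (t : ℝ) (n : ℕ) : ℂ := Complex.exp (Complex.I * ((t * n : ℝ) : ℂ)) - 1

lemma norm_exp1 (y : ℝ) : ‖Complex.exp (Complex.I * (y:ℂ))‖ = 1 := by
  rw [mul_comm]; exact Complex.norm_exp_ofReal_mul_I y

lemma E_le2 (t : ℝ) (n : ℕ) : ‖E t n‖ ≤ 2 := by
  unfold E
  refine (norm_sub_le _ _).trans ?_
  rw [norm_exp1]; norm_num

lemma E_le (t : ℝ) (n : ℕ) : ‖E t n‖ ≤ min 2 (|t| * n) := by
  refine le_min (E_le2 t n) ?_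
  refine Real.norm_exp_I_mul_ofReal_sub_one_le.trans ?_
  rw [Real.norm_eq_abs, abs_mul, Nat.abs_cast]

lemma E_zero (t : ℝ) : E t 0 = 0 := by simp [E]

lemma integ {Z : ℝ → ℕ} (hZ : Measurable Z) (f : ℕ → ℂ) (hf : ∀ n, ‖f n‖ ≤ 4) :
    Integrable (fun x => f (Z x)) gaussMeasure :=
  Integrable.of_bound ((Measurable.of_discrete (f := f)).comp hZ).aestronglyMeasurable 4
    (Filter.Eventually.of_forall fun x => hf _)

lemma int_sum {Z : ℝ → ℕ} (hZ : Measurable Z)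
    (hq : ∀ n, n ≠ 0 → gaussMeasure.real (Z ⁻¹' {n}) = q n)
    (f : ℕ → ℂ) (hf : ∀ n, ‖f n‖ ≤ 4) (h0 : f 0 = 0) :
    ∫ x, f (Z x) ∂gaussMeasure = ∑' n, (q n : ℂ) * f n := by
  have hfm : AEStronglyMeasurable f (Measure.map Z gaussMeasure) :=
    (Measurable.of_discrete (f := f)).aestronglyMeasurable
  rw [← integral_map hZ.aemeasurable hfm, integral_countable]
  · congr 1; ext n
    rcases eq_or_ne n 0 with rfl | hn
    · simp [h0]
    rw [map_measureReal_apply hZ (measurableSet_singleton _), hq n hn, Complex.real_smul]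
  · have := Measure.isFiniteMeasure_map gaussMeasure Z
    exact Integrable.of_bound hfm 4 (Filter.Eventually.of_forall fun x => hf _)

lemma delta_bound {t : ℝ} (ht : 0 < t) (h : t < 1/3) :
    ‖∫ x, E t (X x) * E (-t) (Y x) ∂gaussMeasure‖ ≤ 200 * t^2 * |Real.log t|^2 := by
  set f : ℕ × ℕ → ℂ := fun z => E t z.1 * E (-t) z.2 with hfdef
  have hf : ∀ z, ‖f z‖ ≤ 4 := by
    intro z
    rw [hfdef, norm_mul]
    have := mul_le_mul (E_le2 t z.1) (E_le2 (-t) z.2) (norm_nonneg _) zero_le_two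
    linarith
  set Z : ℝ → ℕ × ℕ := fun x => (X x, Y x) with hZdef
  have hZ : Measurable Z := mX.prodMk mY
  have hfm : AEStronglyMeasurable f (Measure.map Z gaussMeasure) :=
    (Measurable.of_discrete (f := f)).aestronglyMeasurable
  have hs := s_summable ht h
  have hss := hs.mul_of_nonneg hs (s_nonneg ht) (s_nonneg ht)
  have e : ∫ x, E t (X x) * E (-t) (Y x) ∂gaussMeasure = ∫ z, f z ∂(Measure.map Z gaussMeasure) :=
    (integral_map hZ.aemeasurable hfm).symm
  rw [e, integral_countable]
  · refine (tsum_of_norm_bounded (hss.mul_left 2).hasSum ?_).trans ?_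
    · rintro ⟨n, m⟩
      rcases eq_or_ne n 0 with rfl | hn
      · simp [hfdef, E_zero, s]
      rcases eq_or_ne m 0 with rfl | hm
      · simp [hfdef, E_zero, s]
      have hpre : Z ⁻¹' {(n, m)} = X ⁻¹' {n} ∩ Y ⁻¹' {m} := by
        ext x; simp [hZdef]
      rw [map_measureReal_apply hZ (measurableSet_singleton _), hpre, pXY hn hm, norm_smul,
        Real.norm_eq_abs, abs_of_nonneg (p_nonneg hn hm), hfdef, norm_mul]
      have b1 := E_le t n
      have b2 := E_le (-t) m
      rw [abs_neg] at b2
      rw [abs_of_pos ht] at b1 b2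
      calc _ ≤ (2 * (1 / (n:ℝ)^2) * (1 / (m:ℝ)^2)) * (min 2 (t * n) * min 2 (t * m)) := by
            gcongr
            exact p_le hn hm
        _ = _ := by unfold s; ring
    · rw [tsum_mul_left, ← hs.tsum_mul_tsum hs hss]
      have h1 := s_tsum ht h
      have h0 : 0 ≤ ∑' n, s t n := tsum_nonneg (s_nonneg ht)
      have := mul_le_mul h1 h1 h0 (by positivity)
      nlinarith
  · have := Measure.isFiniteMeasure_map gaussMeasure Z
    exact Integrable.of_bound hfm 4 (Filter.Eventually.of_forall fun x => hf _)

lemma E_add (t : ℝ) (n : ℕ) : E t n + E (-t) n = ((2 * (Real.cos (t * n) - 1) : ℝ) : ℂ) := by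
  unfold E
  push_cast
  have e1 : Complex.I * ((t:ℂ) * n) = (t * n) * Complex.I := by ring
  have e2 : Complex.I * (-(t:ℂ) * n) = -(t * n) * Complex.I := by ring
  rw [e1, e2, mul_sub, Complex.two_cos]
  ring

end GK

theorem stmt_16 : ∃ C > (0:ℝ), ∃ t₀ > (0:ℝ), ∀ t : ℝ, 0 < t → t < t₀ →
    ‖(∫ x, (Complex.exp (Complex.I * (t : ℂ) *
          (((⌊1 / x⌋ : ℝ) - (⌊1 / gaussMap x⌋ : ℝ) : ℝ) : ℂ)) - 1) ∂gaussMeasure) -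
        ((-(Real.pi / Real.log 2) * t : ℝ) : ℂ)‖ ≤
      C * t ^ 2 * (Real.log t) ^ 2 := by
  open GK in
  refine ⟨300, by norm_num, 1/3, by norm_num, ?_⟩
  intro t ht h
  have hL := log_ge ht h
  have hint : (∫ x, (Complex.exp (Complex.I * (t : ℂ) *
          (((⌊1 / x⌋ : ℝ) - (⌊1 / gaussMap x⌋ : ℝ) : ℝ) : ℂ)) - 1) ∂gaussMeasure) =
      ∫ x, (E t (X x) * E (-t) (Y x) + (E t (X x) + E (-t) (Y x))) ∂gaussMeasure := by
    apply integral_congr_ae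
    filter_upwards [ae_mem] with x hx
    have hx0 : 0 < x := hx.1
    have hT : 0 ≤ gaussMap x := Int.fract_nonneg _
    rw [← natCast_floor_eq_intCast_floor (by positivity : 0 ≤ 1 / x),
      ← natCast_floor_eq_intCast_floor (by positivity : 0 ≤ 1 / gaussMap x)]
    change Complex.exp (Complex.I * (t : ℂ) * (((X x : ℝ) - (Y x : ℝ) : ℝ) : ℂ)) - 1 = _
    have : Complex.I * (t : ℂ) * (((X x : ℝ) - (Y x : ℝ) : ℝ) : ℂ) = 
      Complex.I * ((t * X x : ℝ) : ℂ) + Complex.I * ((-t * Y x : ℝ) : ℂ) := by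
      push_cast; ring
    rw [this, Complex.exp_add]
    unfold E
    ring
  have b1 : ∀ n, ‖E t n‖ ≤ 4 := fun n => (E_le2 t n).trans (by norm_num)
  have b2 : ∀ n, ‖E (-t) n‖ ≤ 4 := fun n => (E_le2 (-t) n).trans (by norm_num)
  have i1 := integ mX (E t) b1
  have i2 := integ mY (E (-t)) b2
  have i2' := integ mX (E (-t)) b2
  have i3 : Integrable (fun x => E t (X x) * E (-t) (Y x)) gaussMeasure := by
    refine Integrable.of_bound (i1.1.mul i2.1) 4 (Filter.Eventually.of_forall fun x => ?_)
    rw [norm_mul]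
    have := mul_le_mul (E_le2 t (X x)) (E_le2 (-t) (Y x)) (norm_nonneg _) zero_le_two
    linarith
  have hYX : ∫ x, E (-t) (Y x) ∂gaussMeasure = ∫ x, E (-t) (X x) ∂gaussMeasure := by
    rw [int_sum mY (fun n hn => qY hn) _ b2 (E_zero _), int_sum mX (fun n hn => qX hn) _ b2 (E_zero _)]
  have hre : ∫ x, E t (X x) ∂gaussMeasure + ∫ x, E (-t) (X x) ∂gaussMeasure =
      ((∑' n : ℕ, q n * (2 * (Real.cos (t * n) - 1)) : ℝ) : ℂ) := by
    rw [← integral_add i1 i2']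
    have b3 : ∀ n, ‖E t n + E (-t) n‖ ≤ 4 := fun n =>
      (norm_add_le _ _).trans (by linarith [E_le2 t n, E_le2 (-t) n])
    rw [int_sum mX (fun n hn => qX hn) (fun n => E t n + E (-t) n) b3 (by simp [E_zero]),
      Complex.ofReal_tsum]
    congr 1; ext n
    rw [E_add, ← Complex.ofReal_mul]
  rw [hint, integral_add i3 (show Integrable (fun x => E t (X x) + E (-t) (Y x)) gaussMeasure from i1.add i2), integral_add i1 i2, hYX, hre, add_sub_assoc,
    ← Complex.ofReal_sub]
  refine (norm_add_le _ _).trans ?_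
  rw [Complex.norm_real, Real.norm_eq_abs]
  have d1 := delta_bound ht h
  have d2 := (real_part ht h).2
  rw [← sq_abs (Real.log t)]
  set L := |Real.log t|
  have ht2 : 0 < t^2 := by positivity
  have c1 : t^2 * 1 ≤ t^2 * L^2 := mul_le_mul_of_nonneg_left (by nlinarith) ht2.le
  have c2 : t^2 * L ≤ t^2 * L^2 := mul_le_mul_of_nonneg_left (by nlinarith) ht2.le
  linarith
end

section
/- Let λ ∈ (1/2, 1) ∪ (1, ∞) and φ_λ(x) = ⌊1/x⌋^λ on (0,1), with μ the Gauss–Kuzmin measure. Then as t → 0⁺, ∫₀¹ (e^{itφ_λ(x)} − 1) dμ(x) = 1_{λ<1}·i c₁ t + c_* t^{1/λ} + O_ε(t^{1/λ} |log t|^{−1+ε}) for every ε ∈ (0,1), where c_* = −exp(−πi/(2λ)) Γ(1 − 1/λ)/log 2 and, when λ < 1, c₁ = ∫₀¹ ⌊1/x⌋^λ dμ(x). -/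
open MeasureTheory

lemma gauss_dens_meas : Measurable (fun x : ℝ => ENNReal.ofReal (1 / ((1 + x) * Real.log 2))) := by
  fun_prop

lemma gauss_integral (g : ℝ → ℂ) : ∫ x, g x ∂gaussMeasure =
    (1 / Real.log 2 : ℝ) • ∫ x in Set.Ioo (0:ℝ) 1, (1 + x)⁻¹ • g x := by
  unfold gaussMeasure
  rw [integral_withDensity_eq_integral_toReal_smul gauss_dens_meas (by simp), ← integral_smul]
  apply setIntegral_congr_fun measurableSet_Ioo
  intro x hx
  have h2 : 0 < Real.log 2 := Real.log_pos (by norm_num)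
  have h1 : (0:ℝ) < 1 + x := by linarith [hx.1]
  simp only
  rw [ENNReal.toReal_ofReal (by positivity), smul_smul]
  congr 1
  field_simp

lemma scaling (F : ℝ → ℂ) (lam t : ℝ) (hl : 0 < lam) (ht : 0 < t) :
    ∫ x in Set.Ioi (0:ℝ), F (t * x ^ (-lam)) =
      (t ^ (1/lam) : ℝ) • ∫ x in Set.Ioi (0:ℝ), F (x ^ (-lam)) := by
  have hb : 0 < t ^ (1/lam) := Real.rpow_pos_of_pos ht _
  have h := integral_comp_mul_left_Ioi (fun x => F (t * x ^ (-lam))) 0 hb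
  rw [mul_zero] at h
  have h2 : ∫ x in Set.Ioi (0:ℝ), F (t * (t ^ (1/lam) * x) ^ (-lam)) =
      ∫ x in Set.Ioi (0:ℝ), F (x ^ (-lam)) := by
    apply setIntegral_congr_fun measurableSet_Ioi
    intro x hx
    have hx : 0 < x := hx
    simp only
    rw [Real.mul_rpow hb.le hx.le, ← Real.rpow_mul ht.le]
    have : 1 / lam * -lam = -1 := by field_simp
    rw [this, Real.rpow_neg_one]
    congr 1
    field_simp
  rw [← h2, h, smul_smul, mul_inv_cancel₀ hb.ne', one_smul]

lemma core (F : ℝ → ℂ) (hFc : Continuous F) (lam β γ κ K : ℝ) (hl : 0 < lam)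
    (hβ1 : 1 < lam * β) (hβ2 : lam * β < 2) (hγ : lam * γ < 1) (hκ : κ < 1) (hK : 0 ≤ K)
    (hF : ∀ u, 0 < u → ‖F u‖ ≤ K * u ^ β) (hF' : ∀ u, 0 < u → ‖F u‖ ≤ K * u ^ γ)
    (hD : ∀ t, 0 < t → ∀ x ∈ Set.Ioo (0:ℝ) 1,
      ‖F (t * (⌊1/x⌋ : ℝ) ^ lam) - F (t * x ^ (-lam))‖ ≤ K * t ^ β * x ^ (-κ)) :
    ∃ C, 0 ≤ C ∧ ∀ t, 0 < t →
      ‖∫ x, F (t * (⌊1/x⌋ : ℝ) ^ lam) ∂gaussMeasure -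
        (1 / Real.log 2 : ℝ) • ((t ^ (1/lam) : ℝ) • ∫ x in Set.Ioi (0:ℝ), F (x ^ (-lam)))‖
        ≤ C * t ^ β := by
  have hl2 : 0 < Real.log 2 := Real.log_pos (by norm_num)
  have iA : IntegrableOn (fun x : ℝ => x ^ (-κ)) (Set.Ioo 0 1) :=
    (intervalIntegral.integrableOn_Ioo_rpow_iff one_pos).2 (by linarith)
  have iB : IntegrableOn (fun x : ℝ => x ^ (1 - lam * β)) (Set.Ioo 0 1) :=
    (intervalIntegral.integrableOn_Ioo_rpow_iff one_pos).2 (by linarith)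
  have iE : IntegrableOn (fun x : ℝ => x ^ (-(lam * γ))) (Set.Ioo 0 1) :=
    (intervalIntegral.integrableOn_Ioo_rpow_iff one_pos).2 (by linarith)
  have iC : IntegrableOn (fun x : ℝ => x ^ (-(lam * β))) (Set.Ici 1) := by
    rw [integrableOn_Ici_iff_integrableOn_Ioi]
    exact integrableOn_Ioi_rpow_of_lt (by linarith) one_pos
  have pw : ∀ t : ℝ, 0 < t → ∀ x : ℝ, 0 < x → ∀ b : ℝ, (t * x ^ (-lam)) ^ b = t ^ b * x ^ (-(lam * b)) := by
    intro t ht x hx b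
    rw [Real.mul_rpow ht.le (Real.rpow_nonneg hx.le _), ← Real.rpow_mul hx.le, neg_mul]
  set a := ∫ x in Set.Ioo (0:ℝ) 1, x ^ (-κ)
  set b := ∫ x in Set.Ioo (0:ℝ) 1, x ^ (1 - lam * β)
  set c := ∫ x in Set.Ici (1:ℝ), x ^ (-(lam * β))
  have ha : 0 ≤ a := setIntegral_nonneg measurableSet_Ioo fun x hx => Real.rpow_nonneg hx.1.le _
  have hb : 0 ≤ b := setIntegral_nonneg measurableSet_Ioo fun x hx => Real.rpow_nonneg hx.1.le _
  have hc : 0 ≤ c := setIntegral_nonneg measurableSet_Ici fun x hx =>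
    Real.rpow_nonneg (zero_le_one.trans hx) _
  refine ⟨(1 / Real.log 2) * (K * (a + b + c)), by positivity, fun t ht => ?_⟩
  rw [gauss_integral, ← scaling F lam t hl ht, ← smul_sub, norm_smul, Real.norm_of_nonneg (by positivity)]
  have htb : 0 < t ^ β := Real.rpow_pos_of_pos ht _
  rw [mul_assoc]
  refine mul_le_mul_of_nonneg_left ?_ (by positivity)
  set G : ℝ → ℂ := fun x => F (t * x ^ (-lam)) with hG
  set A : ℝ → ℂ := fun x => (1 + x)⁻¹ • (F (t * (⌊1/x⌋ : ℝ) ^ lam) - G x) with hA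
  set B : ℝ → ℂ := fun x => (x * (1 + x)⁻¹) • G x with hB
  have mG : Measurable G := hFc.measurable.comp (by fun_prop)
  have mH : Measurable (fun x : ℝ => F (t * (⌊1/x⌋ : ℝ) ^ lam)) := by
    apply hFc.measurable.comp
    have : Measurable (fun x : ℝ => ((⌊1/x⌋ : ℤ) : ℝ)) :=
      (measurable_from_top (f := fun n : ℤ => (n : ℝ))).comp
        (Int.measurable_floor.comp (measurable_const.div measurable_id))
    fun_prop
  have mA : Measurable A := Measurable.smul (f := fun x : ℝ => (1 + x)⁻¹) (by fun_prop) (mH.sub mG)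
  have mB : Measurable B := Measurable.smul (f := fun x : ℝ => x * (1 + x)⁻¹) (by fun_prop) mG
  have bA : ∀ x ∈ Set.Ioo (0:ℝ) 1, ‖A x‖ ≤ K * t ^ β * x ^ (-κ) := by
    intro x hx
    have h0 := hx.1
    rw [hA]; simp only
    rw [norm_smul, Real.norm_of_nonneg (by positivity)]
    refine (mul_le_of_le_one_left (norm_nonneg _) ?_).trans (hD t ht x hx)
    exact inv_le_one_of_one_le₀ (by linarith)
  have bB : ∀ x ∈ Set.Ioo (0:ℝ) 1, ‖B x‖ ≤ K * t ^ β * x ^ (1 - lam * β) := by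
    intro x hx
    have h0 := hx.1
    rw [hB]; simp only
    rw [norm_smul, Real.norm_of_nonneg (by positivity)]
    have h1 := hF (t * x ^ (-lam)) (mul_pos ht (Real.rpow_pos_of_pos h0 _))
    rw [pw t ht x h0] at h1
    have h2 : x * (1 + x)⁻¹ ≤ x := mul_le_of_le_one_right h0.le (inv_le_one_of_one_le₀ (by linarith))
    calc _ ≤ x * (K * (t ^ β * x ^ (-(lam * β)))) := mul_le_mul h2 h1 (norm_nonneg _) h0.le
      _ = _ := by
        rw [sub_eq_add_neg, Real.rpow_add h0, Real.rpow_one]; ring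
  have bC : ∀ x ∈ Set.Ici (1:ℝ), ‖G x‖ ≤ K * t ^ β * x ^ (-(lam * β)) := by
    intro x hx
    have h0 : 0 < x := one_pos.trans_le hx
    have h1 := hF (t * x ^ (-lam)) (mul_pos ht (Real.rpow_pos_of_pos h0 _))
    rw [pw t ht x h0] at h1
    rw [mul_assoc]; exact h1
  have bE : ∀ x ∈ Set.Ioo (0:ℝ) 1, ‖G x‖ ≤ K * t ^ γ * x ^ (-(lam * γ)) := by
    intro x hx
    have h0 := hx.1
    have h1 := hF' (t * x ^ (-lam)) (mul_pos ht (Real.rpow_pos_of_pos h0 _))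
    rw [pw t ht x h0] at h1
    rw [mul_assoc]; exact h1
  have jA : IntegrableOn A (Set.Ioo 0 1) := Integrable.mono' (iA.const_mul (K * t ^ β))
    mA.aestronglyMeasurable ((ae_restrict_iff' measurableSet_Ioo).2 (.of_forall bA))
  have jB : IntegrableOn B (Set.Ioo 0 1) := Integrable.mono' (iB.const_mul (K * t ^ β))
    mB.aestronglyMeasurable ((ae_restrict_iff' measurableSet_Ioo).2 (.of_forall bB))
  have jE : IntegrableOn G (Set.Ioo 0 1) := Integrable.mono' (iE.const_mul (K * t ^ γ))
    mG.aestronglyMeasurable ((ae_restrict_iff' measurableSet_Ioo).2 (.of_forall bE))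
  have jC : IntegrableOn G (Set.Ici 1) := Integrable.mono' (iC.const_mul (K * t ^ β))
    mG.aestronglyMeasurable ((ae_restrict_iff' measurableSet_Ici).2 (.of_forall bC))
  have nA : ‖∫ x in Set.Ioo (0:ℝ) 1, A x‖ ≤ K * t ^ β * a := by
    rw [← integral_const_mul]
    exact norm_integral_le_of_norm_le (iA.const_mul _)
      ((ae_restrict_iff' measurableSet_Ioo).2 (.of_forall bA))
  have nB : ‖∫ x in Set.Ioo (0:ℝ) 1, B x‖ ≤ K * t ^ β * b := by
    rw [← integral_const_mul]
    exact norm_integral_le_of_norm_le (iB.const_mul _)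
      ((ae_restrict_iff' measurableSet_Ioo).2 (.of_forall bB))
  have nC : ‖∫ x in Set.Ici (1:ℝ), G x‖ ≤ K * t ^ β * c := by
    rw [← integral_const_mul]
    exact norm_integral_le_of_norm_le (iC.const_mul _)
      ((ae_restrict_iff' measurableSet_Ici).2 (.of_forall bC))
  have s1 : ∫ x in Set.Ioi (0:ℝ), G x = (∫ x in Set.Ioo (0:ℝ) 1, G x) + ∫ x in Set.Ici (1:ℝ), G x := by
    rw [← Set.Ioo_union_Ici_eq_Ioi (zero_lt_one' ℝ)]
    apply setIntegral_union _ measurableSet_Ici jE jC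
    rw [Set.disjoint_left]; intro x hx hx'
    exact absurd hx.2 (not_lt.2 hx')
  have s2 : ∫ x in Set.Ioo (0:ℝ) 1, (1 + x)⁻¹ • F (t * (⌊1/x⌋ : ℝ) ^ lam) =
      (∫ x in Set.Ioo (0:ℝ) 1, A x) + (∫ x in Set.Ioo (0:ℝ) 1, G x) - ∫ x in Set.Ioo (0:ℝ) 1, B x := by
    rw [← integral_add jA jE, ← integral_sub (f := fun a => A a + G a) (jA.add jE) jB]
    apply setIntegral_congr_fun measurableSet_Ioo
    intro x hx
    have h0 : (0:ℝ) < 1 + x := by linarith [hx.1]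
    have h1 : (x * (1 + x)⁻¹) = 1 - (1+x)⁻¹ := by field_simp; ring
    simp only [hA, hB]
    rw [h1, smul_sub, sub_smul, one_smul]; ring
  rw [s1, s2]
  have e : ((∫ x in Set.Ioo (0:ℝ) 1, A x) + (∫ x in Set.Ioo (0:ℝ) 1, G x) - ∫ x in Set.Ioo (0:ℝ) 1, B x)
    - ((∫ x in Set.Ioo (0:ℝ) 1, G x) + ∫ x in Set.Ici (1:ℝ), G x) =
    (∫ x in Set.Ioo (0:ℝ) 1, A x) - (∫ x in Set.Ioo (0:ℝ) 1, B x) - ∫ x in Set.Ici (1:ℝ), G x := by ring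
  rw [e]
  calc _ ≤ _ := (norm_sub_le _ _).trans (add_le_add_left (norm_sub_le _ _) _)
    _ ≤ K * t ^ β * a + K * t ^ β * b + K * t ^ β * c := add_le_add (add_le_add nA nB) nC
    _ = _ := by ring

lemma interp {z K u p q b : ℝ} (hu : 0 < u) (hK : 0 ≤ K) (h1 : z ≤ K * u ^ p) (h2 : z ≤ K * u ^ q)
    (hq : q ≤ b) (hp : b ≤ p) : z ≤ K * u ^ b := by
  rcases le_total u 1 with h | h
  · exact h1.trans (mul_le_mul_of_nonneg_left (Real.rpow_le_rpow_of_exponent_ge hu h hp) hK)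
  · exact h2.trans (mul_le_mul_of_nonneg_left (Real.rpow_le_rpow_of_exponent_le h hq) hK)

noncomputable def bd (p q x : ℝ) : ℝ := if x ≤ 1 then x ^ p else x ^ q

lemma bd_int {p q : ℝ} (hp : -1 < p) (hq : q < -1) : IntegrableOn (bd p q) (Set.Ioi 0) := by
  rw [← Set.Ioc_union_Ioi_eq_Ioi (zero_le_one' ℝ), integrableOn_union]
  constructor
  · have := (intervalIntegral.integrableOn_Ioo_rpow_iff one_pos).2 hp
    rw [← integrableOn_Ioc_iff_integrableOn_Ioo] at this
    exact this.congr_fun (fun x hx => by simp [bd, hx.2]) measurableSet_Ioc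
  · exact (integrableOn_Ioi_rpow_of_lt hq one_pos).congr_fun
      (fun x hx => by simp [bd, not_le.2 (Set.mem_Ioi.1 hx)]) measurableSet_Ioi

lemma le_bd {z K x p q : ℝ} (h1 : z ≤ K * x ^ p) (h2 : z ≤ K * x ^ q) : z ≤ K * bd p q x := by
  unfold bd; split_ifs <;> assumption

lemma byparts (u u' : ℝ → ℂ) (K p q α : ℝ) (hu : ∀ x ∈ Set.Ioi (0:ℝ), HasDerivAt u (u' x) x)
    (huc : Continuous u)
    (h1 : ∀ x, 0 < x → ‖u x‖ ≤ K * x ^ p) (h2 : ∀ x, 0 < x → ‖u x‖ ≤ K * x ^ q)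
    (hq : q < α) (hp : α < p) (hα : 0 < α)
    (hi : IntegrableOn (fun x => u' x * ((x ^ (-α) : ℝ) : ℂ)) (Set.Ioi 0)) :
    ∫ x in Set.Ioi (0:ℝ), (α * x ^ (-α - 1)) • u x =
    ∫ x in Set.Ioi (0:ℝ), u' x * ((x ^ (-α) : ℝ) : ℂ) := by
  have key := integral_Ioi_mul_deriv_eq_deriv_mul (a := 0) (a' := 0) (b' := 0) (u := u) (u' := u')
    (v := fun x : ℝ => -((x ^ (-α) : ℝ) : ℂ)) (v' := fun x : ℝ => ((α * x ^ (-α - 1) : ℝ) : ℂ))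
    hu ?_ ?_ ?_ ?_ ?_
  · have e1 : ∫ x in Set.Ioi (0:ℝ), (α * x ^ (-α - 1)) • u x =
      ∫ x in Set.Ioi (0:ℝ), u x * ((α * x ^ (-α - 1) : ℝ) : ℂ) := by
      congr 1; ext x; rw [Complex.real_smul, mul_comm]
    rw [e1, key]
    simp only [mul_neg, integral_neg]
    simp
  · intro x hx
    have h := (Real.hasDerivAt_rpow_const (p := -α) (Or.inl (ne_of_gt hx))).neg.ofReal_comp
    simpa using h
  · refine Integrable.mono' ((bd_int (p := p - α - 1) (q := q - α - 1)
      (by linarith) (by linarith)).const_mul (α * K)) ?_ ?_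
    · exact (huc.measurable.mul (by fun_prop)).aestronglyMeasurable
    · refine (ae_restrict_iff' measurableSet_Ioi).2 (.of_forall fun x hx => ?_)
      have hx : 0 < x := hx
      have hn : ‖((α * x ^ (-α - 1) : ℝ) : ℂ)‖ = α * x ^ (-α - 1) := by
        rw [Complex.norm_real, Real.norm_of_nonneg (by positivity)]
      simp only [Pi.mul_apply]
      rw [norm_mul, hn]
      have ex : ∀ s : ℝ, α * K * x ^ (s - α - 1) = K * x ^ s * (α * x ^ (-α - 1)) := by
        intro s
        rw [show s - α - 1 = s + (-α - 1) by ring, Real.rpow_add hx]; ring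
      apply le_bd
      · rw [ex]; exact mul_le_mul_of_nonneg_right (h1 x hx) (by positivity)
      · rw [ex]; exact mul_le_mul_of_nonneg_right (h2 x hx) (by positivity)
  · have := hi.neg
    refine this.congr_fun (fun x hx => ?_) measurableSet_Ioi
    simp
  · rw [tendsto_zero_iff_norm_tendsto_zero]
    have l : Filter.Tendsto (fun x : ℝ => K * x ^ (p - α)) (nhdsWithin 0 (Set.Ioi 0)) (nhds 0) := by
      have := ((Real.continuousAt_rpow_const 0 (p - α) (Or.inr (by linarith))).tendsto.const_mul K)
      rw [Real.zero_rpow (by linarith), mul_zero] at this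
      exact this.mono_left nhdsWithin_le_nhds
    refine squeeze_zero' (.of_forall fun _ => norm_nonneg _) ?_ l
    filter_upwards [self_mem_nhdsWithin] with x hx
    have hx : 0 < x := hx
    simp only [Pi.mul_apply, norm_mul, norm_neg, Complex.norm_real]
    rw [Real.norm_of_nonneg (by positivity), sub_eq_add_neg, Real.rpow_add hx, ← mul_assoc]
    exact mul_le_mul_of_nonneg_right (h1 x hx) (by positivity)
  · rw [tendsto_zero_iff_norm_tendsto_zero]
    have l : Filter.Tendsto (fun x : ℝ => K * x ^ (q - α)) Filter.atTop (nhds 0) := by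
      have := (tendsto_rpow_neg_atTop (y := α - q) (by linarith)).const_mul K
      rw [mul_zero, neg_sub] at this
      exact this
    refine squeeze_zero' (.of_forall fun _ => norm_nonneg _) ?_ l
    filter_upwards [Filter.eventually_gt_atTop 0] with x hx
    simp only [Pi.mul_apply, norm_mul, norm_neg, Complex.norm_real]
    rw [Real.norm_of_nonneg (by positivity), sub_eq_add_neg, Real.rpow_add hx, ← mul_assoc]
    exact mul_le_mul_of_nonneg_right (h2 x hx) (by positivity)

lemma rexp_int {s c : ℝ} (hs : -1 < s) (hc : 0 < c) :
    IntegrableOn (fun x : ℝ => x ^ s * Real.exp (-c * x)) (Set.Ioi 0) := by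
  have := integrableOn_rpow_mul_exp_neg_mul_rpow (s := s) (p := 1) (b := c) hs one_pos hc
  simpa using this

lemma norm_cexp (r : ℂ) (x : ℝ) : ‖Complex.exp (-(r * x))‖ = Real.exp (-r.re * x) := by
  rw [Complex.norm_exp]; simp

lemma cexp_int {s : ℝ} {r : ℂ} (hs : -1 < s) (hr : 0 < r.re) :
    IntegrableOn (fun x : ℝ => ((x ^ s : ℝ) : ℂ) * Complex.exp (-(r * x))) (Set.Ioi 0) := by
  refine Integrable.mono' (rexp_int hs hr) (Measurable.aestronglyMeasurable (by fun_prop)) ?_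
  refine (ae_restrict_iff' measurableSet_Ioi).2 (.of_forall fun x hx => ?_)
  have hx : 0 < x := hx
  rw [norm_mul, norm_cexp, Complex.norm_real, Real.norm_of_nonneg (by positivity)]

lemma gamma_complex {s : ℝ} (hs : 0 < s) {r : ℂ} (hr : 0 < r.re) :
    ∫ x in Set.Ioi (0:ℝ), ((x ^ (s - 1) : ℝ) : ℂ) * Complex.exp (-(r * x)) =
      (1 / r) ^ (s : ℂ) * Real.Gamma s := by
  set H : ℂ → ℂ := fun r => ∫ x in Set.Ioi (0:ℝ), ((x ^ (s - 1) : ℝ) : ℂ) * Complex.exp (-(r * x))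
  set R : ℂ → ℂ := fun r => (1 / r) ^ (s : ℂ) * Real.Gamma s
  set U : Set ℂ := {z | 0 < z.re}
  have hU : IsOpen U := isOpen_lt continuous_const Complex.continuous_re
  have hc : IsPreconnected U := (convex_halfSpace_re_gt 0).isPreconnected
  have dH : DifferentiableOn ℂ H U := by
    intro z hz
    have hz : 0 < z.re := hz
    refine DifferentiableAt.differentiableWithinAt ?_
    refine (hasDerivAt_integral_of_dominated_loc_of_deriv_le (𝕜 := ℂ)
      (μ := volume.restrict (Set.Ioi (0:ℝ)))
      (F := fun r (x : ℝ) => ((x ^ (s - 1) : ℝ) : ℂ) * Complex.exp (-(r * x)))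
      (F' := fun r (x : ℝ) => ((x ^ (s - 1) : ℝ) : ℂ) * (Complex.exp (-(r * x)) * (-(x : ℂ))))
      (bound := fun x : ℝ => x ^ s * Real.exp (-(z.re / 2) * x))
      (x₀ := z) (s := {w | z.re / 2 < w.re}) ?_ ?_ ?_ ?_ ?_ ?_ ?_).2.differentiableAt
    · exact (isOpen_lt continuous_const Complex.continuous_re).mem_nhds (by simp; linarith)
    · exact .of_forall fun w => Measurable.aestronglyMeasurable (by fun_prop)
    · exact cexp_int (by linarith) hz
    · exact Measurable.aestronglyMeasurable (by fun_prop)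
    · refine (ae_restrict_iff' measurableSet_Ioi).2 (.of_forall fun x hx w hw => ?_)
      have hx : 0 < x := hx
      have hw : z.re / 2 < w.re := hw
      rw [norm_mul, norm_mul, norm_cexp, norm_neg, Complex.norm_real, Complex.norm_real,
        Real.norm_of_nonneg (by positivity), Real.norm_of_nonneg hx.le]
      calc _ = x ^ s * Real.exp (-w.re * x) := by
            have : x ^ s = x ^ (s - 1) * x := by
              rw [← Real.rpow_add_one hx.ne']; congr 1; ring
            rw [this]; ring
        _ ≤ _ := by gcongr
    · exact rexp_int (by linarith) (by linarith)
    · refine .of_forall fun x w _ => ?_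
      have : HasDerivAt (fun r : ℂ => -(r * x)) (-(x : ℂ)) w := by
        simpa using ((hasDerivAt_id w).mul_const (x : ℂ)).fun_neg
      exact (this.cexp).const_mul _
  have dR : DifferentiableOn ℂ R U := by
    intro z hz
    have hz : 0 < z.re := hz
    have hz0 : z ≠ 0 := by rintro rfl; simp at hz
    refine DifferentiableAt.differentiableWithinAt ?_
    refine DifferentiableAt.mul_const ?_ _
    refine DifferentiableAt.cpow_const ?_ ?_
    · exact (differentiableAt_const _).div differentiableAt_id hz0
    · left
      simp only [one_div, Complex.inv_re]
      exact div_pos hz (Complex.normSq_pos.2 hz0)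
  have aH := dH.analyticOnNhd hU
  have aR := dR.analyticOnNhd hU
  have eqr : ∀ y : ℝ, 0 < y → H y = R y := by
    intro y hy
    have := Complex.integral_cpow_mul_exp_neg_mul_Ioi (a := (s : ℂ)) (by simpa using hs) hy
    simp only [H, R]
    rw [← Complex.Gamma_ofReal, ← this]
    apply setIntegral_congr_fun measurableSet_Ioi
    intro x hx
    have hx : 0 < x := hx
    simp only
    rw [Complex.ofReal_cpow hx.le]; push_cast; rfl
  have fr : ∃ᶠ z in nhdsWithin (1:ℂ) {1}ᶜ, H z = R z := by
    have t1 : Filter.Tendsto (fun y : ℝ => (y : ℂ)) (nhdsWithin 1 {1}ᶜ) (nhdsWithin 1 {1}ᶜ) := by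
      apply tendsto_nhdsWithin_of_tendsto_nhds_of_eventually_within
      · exact (Complex.continuous_ofReal.tendsto' 1 1 (by simp)).mono_left nhdsWithin_le_nhds
      · filter_upwards [self_mem_nhdsWithin] with y hy
        simpa using hy
    refine t1.frequently (Filter.Eventually.frequently ?_)
    have : ∀ᶠ y : ℝ in nhdsWithin 1 {1}ᶜ, 0 < y :=
      nhdsWithin_le_nhds (lt_mem_nhds one_pos)
    exact this.mono eqr
  exact aH.eqOn_of_preconnected_of_frequently_eq aR hc (by simp [U]) fr hr

lemma exp_sub_one_bd {r : ℂ} (hr : 0 ≤ r.re) {x : ℝ} (hx : 0 ≤ x) :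
    ‖Complex.exp (-(r * x)) - 1‖ ≤ ‖r‖ * x := by
  have := norm_image_sub_le_of_norm_deriv_le_segment' (a := 0) (b := x)
    (f := fun y : ℝ => Complex.exp (-(r * y))) (f' := fun y : ℝ => Complex.exp (-(r * y)) * (-r))
    (C := ‖r‖) ?_ ?_ x (Set.right_mem_Icc.2 hx)
  · simpa using this
  · intro y _
    have : HasDerivAt (fun y : ℝ => -(r * (y : ℂ))) (-r) y := by
      simpa using ((Complex.ofRealCLM.hasDerivAt (x := y)).const_mul r).fun_neg
    exact this.cexp.hasDerivWithinAt
  · intro y hy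
    rw [norm_mul, norm_neg, norm_cexp]
    refine mul_le_of_le_one_left (norm_nonneg _) ?_
    rw [Real.exp_le_one_iff]
    nlinarith [hy.1, mul_nonneg hr hy.1]

lemma exp_sub_one_bd2 {r : ℂ} (hr : 0 ≤ r.re) {x : ℝ} (hx : 0 ≤ x) :
    ‖Complex.exp (-(r * x)) - 1‖ ≤ 2 := by
  have : ‖Complex.exp (-(r * x))‖ ≤ 1 := by
    rw [norm_cexp, Real.exp_le_one_iff]
    nlinarith [mul_nonneg hr hx]
  refine (norm_sub_le _ _).trans ?_
  rw [norm_one]; linarith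

lemma J1r {α : ℝ} (h0 : 0 < α) (h1 : α < 1) {r : ℂ} (hr : 0 < r.re) :
    ∫ x in Set.Ioi (0:ℝ), (α * x ^ (-α - 1)) • (Complex.exp (-(r * x)) - 1) =
      -r * ((1 / r) ^ ((1 - α : ℝ) : ℂ) * Real.Gamma (1 - α)) := by
  rw [byparts (fun x => Complex.exp (-(r * x)) - 1) (fun x => Complex.exp (-(r * x)) * (-r))
    (max ‖r‖ 2) 1 0 α ?_ (by fun_prop) ?_ ?_ h0 h1 h0 ?_]
  · rw [← gamma_complex (by linarith) hr, ← integral_const_mul]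
    congr 1; ext x
    rw [show 1 - α - 1 = -α by ring]; ring
  · intro y _
    have : HasDerivAt (fun y : ℝ => -(r * (y : ℂ))) (-r) y := by
      simpa using ((Complex.ofRealCLM.hasDerivAt (x := y)).const_mul r).fun_neg
    exact this.cexp.sub_const 1
  · intro x hx
    rw [Real.rpow_one]
    exact (exp_sub_one_bd hr.le hx.le).trans (mul_le_mul_of_nonneg_right (le_max_left _ _) hx.le)
  · intro x hx
    rw [Real.rpow_zero, mul_one]
    exact (exp_sub_one_bd2 hr.le hx.le).trans (le_max_right _ _)
  · refine IntegrableOn.congr_fun (Integrable.const_mul (cexp_int (s := -α) (by linarith) hr) (-r))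
      (fun x _ => ?_) measurableSet_Ioi
    ring

lemma J1 {α : ℝ} (h0 : 0 < α) (h1 : α < 1) :
    ∫ x in Set.Ioi (0:ℝ), (α * x ^ (-α - 1)) • (Complex.exp (Complex.I * x) - 1) =
      -(Complex.exp (-(Real.pi : ℂ) * Complex.I * α / 2) * Real.Gamma (1 - α)) := by
  set r : ℝ → ℂ := fun e => (e : ℂ) - Complex.I with hr
  have hrt : Filter.Tendsto r (nhdsWithin 0 (Set.Ioi 0)) (nhds (-Complex.I)) := by
    have : Continuous r := by fun_prop
    exact (this.tendsto' 0 _ (by simp [hr])).mono_left nhdsWithin_le_nhds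
  have re : ∀ e, (r e).re = e := by intro e; simp [hr]
  have L := tendsto_integral_filter_of_dominated_convergence
    (μ := volume.restrict (Set.Ioi (0:ℝ))) (l := nhdsWithin (0:ℝ) (Set.Ioi 0))
    (F := fun e (x : ℝ) => (α * x ^ (-α - 1)) • (Complex.exp (-(r e * x)) - 1))
    (f := fun x : ℝ => (α * x ^ (-α - 1)) • (Complex.exp (Complex.I * x) - 1))
    (fun x => 2 * α * bd (-α) (-α - 1) x) ?_ ?_ ?_ ?_
  · refine tendsto_nhds_unique L ?_
    have ev : (fun e => -r e * ((1 / r e) ^ ((1 - α : ℝ) : ℂ) * Real.Gamma (1 - α))) =ᶠ[nhdsWithin (0:ℝ) (Set.Ioi 0)]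
        (fun e => ∫ x in Set.Ioi (0:ℝ), (α * x ^ (-α - 1)) • (Complex.exp (-(r e * x)) - 1)) := by
      filter_upwards [self_mem_nhdsWithin] with e he
      rw [J1r h0 h1 (by rw [re]; exact he)]
    refine Filter.Tendsto.congr' ev ?_
    have hinv : Filter.Tendsto (fun e => 1 / r e) (nhdsWithin 0 (Set.Ioi 0)) (nhds Complex.I) := by
      have := hrt.inv₀ (by simp)
      simpa using this
    have hpow := hinv.cpow (tendsto_const_nhds (x := ((1 - α : ℝ) : ℂ))) (by simp [Complex.slitPlane])
    have hfin := hrt.neg.mul (hpow.mul_const (Real.Gamma (1 - α) : ℂ))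
    convert hfin using 2
    rw [neg_neg, Complex.cpow_def_of_ne_zero Complex.I_ne_zero, Complex.log_I]
    have : (Real.pi / 2 * Complex.I * ((1 - α : ℝ) : ℂ)) =
      Real.pi / 2 * Complex.I + -(Real.pi : ℂ) * Complex.I * α / 2 := by push_cast; ring
    rw [this, Complex.exp_add, Complex.exp_pi_div_two_mul_I]
    linear_combination (-Complex.exp (-(Real.pi : ℂ) * Complex.I * α / 2) * Real.Gamma (1 - α)) * Complex.I_sq
  · exact .of_forall fun w => Measurable.aestronglyMeasurable (by fun_prop)
  · have : ∀ᶠ e : ℝ in nhdsWithin 0 (Set.Ioi 0), e < 1 := nhdsWithin_le_nhds (gt_mem_nhds one_pos)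
    filter_upwards [self_mem_nhdsWithin, this] with e he he1
    have he : 0 < e := he
    have hn : ‖r e‖ ≤ 2 := by
      refine (norm_sub_le _ _).trans ?_
      rw [Complex.norm_I, Complex.norm_real, Real.norm_of_nonneg he.le]; linarith
    refine (ae_restrict_iff' measurableSet_Ioi).2 (.of_forall fun x hx => ?_)
    have hx : 0 < x := hx
    rw [norm_smul, Real.norm_of_nonneg (by positivity)]
    apply le_bd
    · have := (exp_sub_one_bd (r := r e) (by rw [re]; exact he.le) hx.le).trans
        (mul_le_mul_of_nonneg_right hn hx.le)
      calc _ ≤ (α * x ^ (-α - 1)) * (2 * x) := mul_le_mul_of_nonneg_left this (by positivity)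
        _ = 2 * α * (x ^ (-α - 1) * x ^ (1:ℝ)) := by rw [Real.rpow_one]; ring
        _ = _ := by rw [← Real.rpow_add hx]; ring_nf
    · have := exp_sub_one_bd2 (r := r e) (by rw [re]; exact he.le) hx.le
      calc _ ≤ (α * x ^ (-α - 1)) * 2 := mul_le_mul_of_nonneg_left this (by positivity)
        _ = _ := by ring
  · exact (bd_int (by linarith) (by linarith)).const_mul _
  · refine .of_forall fun x => ?_
    have : Filter.Tendsto (fun e => (α * x ^ (-α - 1)) • (Complex.exp (-(r e * x)) - 1))
      (nhdsWithin 0 (Set.Ioi 0)) (nhds ((α * x ^ (-α - 1)) • (Complex.exp (-(-Complex.I * x)) - 1))) :=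
      ((((hrt.mul_const (x : ℂ)).neg).cexp).sub_const 1).const_smul _
    simpa using this

lemma E1 {x : ℝ} (hx : 0 ≤ x) : ‖Complex.exp (Complex.I * x) - 1‖ ≤ x := by
  have := Real.norm_exp_I_mul_ofReal_sub_one_le (x := x)
  rwa [Real.norm_of_nonneg hx] at this

lemma E1' (x : ℝ) : ‖Complex.exp (Complex.I * x) - 1‖ ≤ 2 := by
  refine (norm_sub_le _ _).trans ?_
  rw [Complex.norm_exp_I_mul_ofReal, norm_one]; norm_num

lemma E2deriv (y : ℝ) : HasDerivAt (fun y : ℝ => Complex.exp (Complex.I * y) - 1 - Complex.I * y)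
    (Complex.I * (Complex.exp (Complex.I * y) - 1)) y := by
  have : HasDerivAt (fun y : ℝ => (Complex.I * (y : ℂ))) Complex.I y := by
    simpa using ((Complex.ofRealCLM.hasDerivAt (x := y)).const_mul Complex.I)
  refine ((this.cexp.sub_const 1).fun_sub this).congr_deriv ?_
  ring

lemma E2diff {γ a b : ℝ} (hγ : 0 ≤ γ) (hγ1 : γ ≤ 1) (ha : 0 ≤ a) (hab : a ≤ b) (hb : 0 < b) :
    ‖(Complex.exp (Complex.I * b) - 1 - Complex.I * b) -
      (Complex.exp (Complex.I * a) - 1 - Complex.I * a)‖ ≤ 2 * b ^ γ * (b - a) := by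
  refine norm_image_sub_le_of_norm_deriv_le_segment' (a := a) (b := b)
    (f := fun y : ℝ => Complex.exp (Complex.I * y) - 1 - Complex.I * y)
    (f' := fun y : ℝ => Complex.I * (Complex.exp (Complex.I * y) - 1))
    (C := 2 * b ^ γ) (fun y _ => (E2deriv y).hasDerivWithinAt) ?_ b (Set.right_mem_Icc.2 hab)
  intro y hy
  rw [norm_mul, Complex.norm_I, one_mul]
  have hy0 : 0 ≤ y := ha.trans hy.1
  refine interp (p := 1) (q := 0) hb (by norm_num) ?_ ?_ hγ hγ1
  · rw [Real.rpow_one]; linarith [E1 hy0, hy.2]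
  · rw [Real.rpow_zero]; linarith [E1' y]

lemma E2 {x : ℝ} (hx : 0 < x) : ‖Complex.exp (Complex.I * x) - 1 - Complex.I * x‖ ≤ 2 * x ^ (2:ℝ) := by
  have := E2diff (γ := 1) zero_le_one le_rfl le_rfl hx.le hx
  simp only [Complex.ofReal_zero, mul_zero, Complex.exp_zero, sub_self, sub_zero] at this
  rw [Real.rpow_one] at this
  rw [Real.rpow_two]; linarith

lemma E2' {x : ℝ} (hx : 0 < x) : ‖Complex.exp (Complex.I * x) - 1 - Complex.I * x‖ ≤ 2 * x ^ (1:ℝ) := by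
  have := E2diff (γ := 0) le_rfl zero_le_one le_rfl hx.le hx
  simp only [Complex.ofReal_zero, mul_zero, Complex.exp_zero, sub_self, sub_zero] at this
  rw [Real.rpow_zero] at this
  rw [Real.rpow_one]; linarith

lemma J2 {α : ℝ} (h0 : 1 < α) (h1 : α < 2) :
    ∫ x in Set.Ioi (0:ℝ), (α * x ^ (-α - 1)) • (Complex.exp (Complex.I * x) - 1 - Complex.I * x) =
      -(Complex.exp (-(Real.pi : ℂ) * Complex.I * α / 2) * Real.Gamma (1 - α)) := by
  rw [byparts (fun x => Complex.exp (Complex.I * x) - 1 - Complex.I * x)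
    (fun x => Complex.I * (Complex.exp (Complex.I * x) - 1)) 2 2 1 α (fun y _ => E2deriv y)
    (by fun_prop) (fun x hx => E2 hx) (fun x hx => E2' hx) h0 h1 (by linarith) ?_]
  · have ha : (α : ℂ) - 1 ≠ 0 := by
      norm_cast; linarith
    have e : ∫ x in Set.Ioi (0:ℝ), Complex.I * (Complex.exp (Complex.I * x) - 1) * ((x ^ (-α) : ℝ) : ℂ) =
      Complex.I / ((α : ℂ) - 1) * ∫ x in Set.Ioi (0:ℝ),
        ((α - 1) * x ^ (-(α - 1) - 1)) • (Complex.exp (Complex.I * x) - 1) := by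
      rw [← integral_const_mul]
      congr 1; ext x
      rw [Complex.real_smul, show -(α - 1) - 1 = -α by ring]
      push_cast; field_simp
    rw [e, J1 (by linarith) (by linarith)]
    have g : Real.Gamma (1 - (α - 1)) = (1 - α) * Real.Gamma (1 - α) := by
      rw [← Real.Gamma_add_one (by linarith)]; congr 1; ring
    have ee : -(Real.pi : ℂ) * Complex.I * ((α - 1 : ℝ) : ℂ) / 2 =
      Real.pi / 2 * Complex.I + -(Real.pi : ℂ) * Complex.I * α / 2 := by push_cast; ring
    rw [g, ee, Complex.exp_add, Complex.exp_pi_div_two_mul_I]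
    push_cast
    generalize Complex.exp (-(Real.pi : ℂ) * Complex.I * α / 2) = E
    field_simp
    linear_combination (((α : ℂ) - 1)  * Real.Gamma (1 - α) * E) * Complex.I_sq
  · refine Integrable.mono' ((bd_int (p := 1 - α) (q := - α)
      (by linarith) (by linarith)).const_mul 2) (Measurable.aestronglyMeasurable (by fun_prop)) ?_
    refine (ae_restrict_iff' measurableSet_Ioi).2 (.of_forall fun x hx => ?_)
    have hx : 0 < x := hx
    rw [norm_mul, norm_mul, Complex.norm_I, one_mul, Complex.norm_real, Real.norm_of_nonneg (by positivity)]
    apply le_bd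
    · rw [sub_eq_add_neg 1 α, Real.rpow_add hx, Real.rpow_one, ← mul_assoc]
      exact mul_le_mul_of_nonneg_right (by linarith [E1 hx.le]) (by positivity)
    · exact mul_le_mul_of_nonneg_right (E1' x) (by positivity)

lemma subst_lam (F : ℝ → ℂ) {lam : ℝ} (hl : 0 < lam) :
    ∫ x in Set.Ioi (0:ℝ), F (x ^ (-lam)) =
      ∫ x in Set.Ioi (0:ℝ), ((1/lam) * x ^ (-(1/lam) - 1)) • F x := by
  rw [← integral_comp_rpow_Ioi (fun x => F (x ^ (-lam))) (p := -(1/lam)) (by simp; linarith)]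
  apply setIntegral_congr_fun measurableSet_Ioi
  intro x hx
  have hx : 0 < x := hx
  simp only
  rw [← Real.rpow_mul hx.le, abs_neg, abs_of_nonneg (by positivity)]
  rw [show -(1/lam) * -lam = 1 by field_simp, Real.rpow_one]

lemma floor_facts {x : ℝ} (hx : x ∈ Set.Ioo (0:ℝ) 1) :
    (1:ℝ) ≤ (⌊1/x⌋ : ℝ) ∧ (⌊1/x⌋ : ℝ) ≤ 1/x ∧ 1/x < (⌊1/x⌋ : ℝ) + 1 := by
  refine ⟨?_, Int.floor_le _, Int.lt_floor_add_one _⟩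
  have : (1:ℤ) ≤ ⌊1/x⌋ := by
    rw [Int.le_floor]
    push_cast
    rw [le_div_iff₀ hx.1]; linarith [hx.2]
  exact_mod_cast this

lemma rpow_diff {lam n y : ℝ} (hl : 0 < lam) (hn : 1 ≤ n) (hny : n ≤ y) (hy : y < n + 1) :
    y ^ lam - n ^ lam ≤ 2 * lam * y ^ (lam - 1) := by
  have hn0 : 0 < n := by linarith
  have hy0 : 0 < y := by linarith
  rcases le_total 1 lam with h | h
  · have b := one_add_mul_self_le_rpow_one_add (s := (n - y) / y)
      (by rw [le_div_iff₀ hy0]; linarith) h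
    rw [show 1 + (n - y) / y = n / y by field_simp; ring, Real.div_rpow hn0.le hy0.le,
      le_div_iff₀ (by positivity)] at b
    have e : y ^ lam = y ^ (lam - 1) * y := by
      rw [← Real.rpow_add_one hy0.ne']; congr 1; ring
    have e2 : (1 + lam * ((n - y) / y)) * y ^ lam = y ^ lam - lam * (y - n) * y ^ (lam - 1) := by
      rw [e]; field_simp; ring
    rw [e2] at b
    have p : 0 < y ^ (lam - 1) := by positivity
    have q : lam * (y - n) ≤ 2 * lam := by nlinarith
    nlinarith [mul_le_mul_of_nonneg_right q p.le]
  · have b := rpow_one_add_le_one_add_mul_self (s := (y - n) / n)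
      (by rw [le_div_iff₀ hn0]; linarith) hl.le h
    rw [show 1 + (y - n) / n = y / n by field_simp; ring, Real.div_rpow hy0.le hn0.le,
      div_le_iff₀ (by positivity)] at b
    have e : n ^ lam = n ^ (lam - 1) * n := by
      rw [← Real.rpow_add_one hn0.ne']; congr 1; ring
    have e2 : (1 + lam * ((y - n) / n)) * n ^ lam = n ^ lam + lam * (y - n) * n ^ (lam - 1) := by
      rw [e]; field_simp
    rw [e2] at b
    have p : 0 < n ^ (lam - 1) := by positivity
    have q : lam * (y - n) ≤ lam := by nlinarith
    have r : n ^ (lam - 1) ≤ 2 * y ^ (lam - 1) := by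
      calc n ^ (lam - 1) ≤ (y / 2) ^ (lam - 1) :=
            Real.rpow_le_rpow_of_nonpos (by linarith) (by linarith) (by linarith)
        _ = 2 ^ (1 - lam) * y ^ (lam - 1) := by
            rw [Real.div_rpow hy0.le (by norm_num), div_eq_mul_inv, ← Real.rpow_neg (by norm_num)]
            rw [neg_sub]; ring
        _ ≤ 2 ^ (1:ℝ) * y ^ (lam - 1) := by
            gcongr
            · norm_num
            · linarith
        _ = _ := by rw [Real.rpow_one]
    have := mul_le_mul_of_nonneg_right q p.le
    nlinarith

lemma inv_pow' {x : ℝ} (hx : 0 < x) (s : ℝ) : (1 / x) ^ s = x ^ (-s) := by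
  rw [one_div, Real.inv_rpow hx.le, Real.rpow_neg hx.le]

lemma disc {lam t x : ℝ} (hl : 0 < lam) (ht : 0 < t) (hx : x ∈ Set.Ioo (0:ℝ) 1) :
    0 ≤ t * x ^ (-lam) - t * (⌊1/x⌋ : ℝ) ^ lam ∧
    t * x ^ (-lam) - t * (⌊1/x⌋ : ℝ) ^ lam ≤ 2 * lam * t * x ^ (-(lam - 1)) := by
  obtain ⟨h1, h2, h3⟩ := floor_facts hx
  have a := rpow_diff hl h1 h2 h3
  rw [inv_pow' hx.1, inv_pow' hx.1] at a
  have b := Real.rpow_le_rpow (by linarith) h2 hl.le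
  rw [inv_pow' hx.1] at b
  constructor
  · nlinarith
  · nlinarith

lemma E1diff (a b : ℝ) : ‖(Complex.exp (Complex.I * a) - 1) - (Complex.exp (Complex.I * b) - 1)‖
    ≤ |b - a| := by
  have e : (Complex.exp (Complex.I * a) - 1) - (Complex.exp (Complex.I * b) - 1) =
      -(Complex.exp (Complex.I * a) * (Complex.exp (Complex.I * ((b - a : ℝ) : ℂ)) - 1)) := by
    rw [mul_sub, ← Complex.exp_add]; push_cast; ring_nf
  rw [e, norm_neg, norm_mul, Complex.norm_exp_I_mul_ofReal, one_mul]
  exact Real.norm_exp_I_mul_ofReal_sub_one_le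

lemma final_bound {al b ε C : ℝ} (hab : al < b) (hε : ε ∈ Set.Ioo (0:ℝ) 1) (hC : 0 ≤ C) :
    ∃ C' > (0:ℝ), ∃ t₀ > (0:ℝ), ∀ t : ℝ, 0 < t → t < t₀ →
      C * t ^ b ≤ C' * t ^ al * |Real.log t| ^ (-1 + ε) := by
  refine ⟨(C + 1) * (1 / (b - al)), by have : 0 < b - al := by linarith
                                       positivity, Real.exp (-1), Real.exp_pos _, ?_⟩
  intro t ht ht1
  have hd : 0 < b - al := by linarith
  have hlog : Real.log t < -1 := by rwa [Real.log_lt_iff_lt_exp ht]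
  have habs : 1 ≤ |Real.log t| := by rw [abs_of_neg (by linarith)]; linarith
  have ht2 : t ≤ 1 := ht1.le.trans (Real.exp_le_one_iff.2 (by norm_num))
  have k := Real.abs_log_mul_self_rpow_lt t (b - al) ht ht2 hd
  rw [abs_mul, abs_of_pos (Real.rpow_pos_of_pos ht _)] at k
  have p : 0 < |Real.log t| := by linarith
  have k2 : t ^ (b - al) ≤ 1 / (b - al) * |Real.log t| ^ (-1 + ε) := by
    calc t ^ (b - al) = (|Real.log t| * t ^ (b - al)) * |Real.log t| ^ (-1:ℝ) := by
          rw [Real.rpow_neg_one]; field_simp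
      _ ≤ 1 / (b - al) * |Real.log t| ^ (-1 + ε) := by
          apply mul_le_mul k.le _ (by positivity) (by positivity)
          exact Real.rpow_le_rpow_of_exponent_le habs (by linarith [hε.1])
  have e : t ^ b = t ^ al * t ^ (b - al) := by rw [← Real.rpow_add ht]; ring_nf
  rw [e]
  have q : 0 < t ^ al := by positivity
  calc C * (t ^ al * t ^ (b - al)) ≤ (C + 1) * (t ^ al * t ^ (b - al)) := by
        apply mul_le_mul_of_nonneg_right _ (by positivity); linarith
    _ ≤ (C + 1) * (t ^ al * (1 / (b - al) * |Real.log t| ^ (-1 + ε))) := by gcongr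
    _ = _ := by ring

lemma meas_floor : Measurable (fun x : ℝ => ((⌊1/x⌋ : ℤ) : ℝ)) :=
  (measurable_from_top (f := fun n : ℤ => (n : ℝ))).comp
    (Int.measurable_floor.comp (measurable_const.div measurable_id))

lemma phi_int {lam : ℝ} (hl : 0 < lam) (h1 : lam < 1) :
    Integrable (fun x : ℝ => (⌊1/x⌋ : ℝ) ^ lam) gaussMeasure := by
  unfold gaussMeasure
  rw [integrable_withDensity_iff_integrable_smul' gauss_dens_meas (by simp)]
  have hl2 : 0 < Real.log 2 := Real.log_pos (by norm_num)
  refine Integrable.mono' (Integrable.const_mul ((intervalIntegral.integrableOn_Ioo_rpow_iff one_pos).2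
    (by linarith : -1 < -lam)) (1 / Real.log 2)) ?_ ?_
  · have := meas_floor
    have := gauss_dens_meas
    exact (Measurable.smul (this.ennreal_toReal) (by fun_prop)).aestronglyMeasurable
  · refine (ae_restrict_iff' measurableSet_Ioo).2 (.of_forall fun x hx => ?_)
    have hx0 := hx.1
    obtain ⟨f1, f2, f3⟩ := floor_facts hx
    rw [ENNReal.toReal_ofReal (by positivity), norm_smul, Real.norm_of_nonneg (by positivity),
      Real.norm_of_nonneg (by positivity), ← inv_pow' hx0]
    apply mul_le_mul _ (Real.rpow_le_rpow (by linarith) f2 hl.le) (by positivity) (by positivity)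
    apply one_div_le_one_div_of_le hl2
    nlinarith

theorem stmt_17 (lam : ℝ) (hlam : lam ∈ Set.Ioo (1/2 : ℝ) 1 ∪ Set.Ioi (1:ℝ))
    (ε : ℝ) (hε : ε ∈ Set.Ioo (0:ℝ) 1) :
    ∃ C > (0:ℝ), ∃ t₀ > (0:ℝ), ∀ t : ℝ, 0 < t → t < t₀ →
    ‖(∫ x, (Complex.exp (Complex.I * (t : ℂ) * (((⌊1 / x⌋ : ℝ) ^ lam : ℝ) : ℂ)) - 1)
          ∂gaussMeasure) -
        (if lam < 1 then 1 else 0 : ℂ) * Complex.I *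
          ((∫ x, ((⌊1 / x⌋ : ℝ) ^ lam : ℝ) ∂gaussMeasure : ℝ) : ℂ) * (t : ℂ) -
        (-(Complex.exp (-(Real.pi : ℂ) * Complex.I / (2 * (lam : ℂ))) *
            (Real.Gamma (1 - 1 / lam) : ℂ)) / (Real.log 2 : ℂ)) *
          ((t ^ (1 / lam) : ℝ) : ℂ)‖ ≤
      C * t ^ (1 / lam) * |Real.log t| ^ (-1 + ε) := by
  have hl : 0 < lam := by
    rcases hlam with h | h
    · linarith [h.1]
    · linarith [Set.mem_Ioi.1 h]
  have hlc : (lam : ℂ) ≠ 0 := by exact_mod_cast hl.ne'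
  have hm := meas_floor
  have eexp : -(Real.pi : ℂ) * Complex.I * ((1 / lam : ℝ) : ℂ) / 2 =
      -(Real.pi : ℂ) * Complex.I / (2 * (lam : ℂ)) := by
    push_cast; field_simp
  have hal : lam * (1 / lam) = 1 := by field_simp
  rcases hlam with h | h
  · have h1 : 1 < 1 / lam := by rw [lt_div_iff₀ hl]; linarith [h.2]
    have h2 : 1 / lam < 2 := by rw [div_lt_iff₀ hl]; linarith [h.1]
    obtain ⟨β, hb1, hb2⟩ := exists_between h2
    have hlb : 1 < lam * β := by rw [← hal]; exact mul_lt_mul_of_pos_left hb1 hl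
    have hlb2 : lam * β < 2 := by nlinarith [h.2]
    have key := core (fun u => Complex.exp (Complex.I * u) - 1 - Complex.I * u)
      (by fun_prop) lam β 1 (lam * β - 1) (2 + 4 * lam) hl hlb hlb2 (by linarith [h.2])
      (by linarith) (by linarith) ?_ ?_ ?_
    · obtain ⟨C, hC, hc⟩ := key
      obtain ⟨C', hC', t₀, ht₀, H⟩ := final_bound hb1 hε hC
      refine ⟨C', hC', t₀, ht₀, fun t ht htt => le_trans (le_of_eq ?_) ((hc t ht).trans (H t ht htt))⟩
      rw [subst_lam (fun u => Complex.exp (Complex.I * u) - 1 - Complex.I * u) hl, J2 h1 h2, eexp, if_pos h.2]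
      have ip := phi_int hl h.2
      have split : ∫ x, (Complex.exp (Complex.I * ((t * (⌊1/x⌋ : ℝ) ^ lam : ℝ) : ℂ)) - 1 -
          Complex.I * ((t * (⌊1/x⌋ : ℝ) ^ lam : ℝ) : ℂ)) ∂gaussMeasure =
          (∫ x, (Complex.exp (Complex.I * (t : ℂ) * (((⌊1 / x⌋ : ℝ) ^ lam : ℝ) : ℂ)) - 1)
          ∂gaussMeasure) - Complex.I * t * ((∫ x, ((⌊1 / x⌋ : ℝ) ^ lam : ℝ) ∂gaussMeasure : ℝ) : ℂ) := by
        rw [← integral_complex_ofReal, ← integral_const_mul, ← integral_sub]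
        · congr 1; ext x; push_cast; ring_nf
        · refine Integrable.mono' (ip.const_mul t) (Measurable.aestronglyMeasurable (by fun_prop)) ?_
          unfold gaussMeasure
          refine (withDensity_absolutelyContinuous _ _).ae_le ?_
          refine (ae_restrict_iff' measurableSet_Ioo).2 (.of_forall fun x hx => ?_)
          have f1 := (floor_facts hx).1
          have := E1 (x := t * (⌊1/x⌋ : ℝ) ^ lam) (by positivity)
          push_cast at this ⊢
          rw [mul_assoc]; exact this
        · exact (ip.ofReal).const_mul _
      rw [split]
      congr 1
      simp only [Complex.real_smul]
      push_cast
      ring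
    · intro u hu
      refine interp (p := 2) (q := 1) hu (by linarith) ?_ ?_ (by linarith) hb2.le
      · exact (E2 hu).trans (mul_le_mul_of_nonneg_right (by linarith) (by positivity))
      · exact (E2' hu).trans (mul_le_mul_of_nonneg_right (by linarith) (by positivity))
    · intro u hu
      exact (E2' hu).trans (mul_le_mul_of_nonneg_right (by linarith) (by positivity))
    · intro t ht x hx
      have hx0 := hx.1
      obtain ⟨d1, d2⟩ := disc hl ht hx
      have f1 := (floor_facts hx).1
      rw [norm_sub_rev]
      have hv : 0 < t * x ^ (-lam) := by positivity
      refine (E2diff (γ := β - 1) (by linarith) (by linarith) (by positivity) (by linarith) hv).trans ?_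
      calc 2 * (t * x ^ (-lam)) ^ (β - 1) * (t * x ^ (-lam) - t * (⌊1/x⌋ : ℝ) ^ lam)
          ≤ 2 * (t * x ^ (-lam)) ^ (β - 1) * (2 * lam * t * x ^ (-(lam - 1))) := by gcongr
        _ = 4 * lam * (t ^ (β - 1) * t) * (x ^ (-lam * (β - 1)) * x ^ (-(lam - 1))) := by
          rw [Real.mul_rpow ht.le (by positivity), ← Real.rpow_mul hx0.le]; ring
        _ = 4 * lam * t ^ β * x ^ (-(lam * β - 1)) := by
          rw [← Real.rpow_add hx0, ← Real.rpow_add_one ht.ne']; ring_nf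
        _ ≤ _ := by gcongr; linarith
  · have h : 1 < lam := h
    have h0 : 0 < 1 / lam := by positivity
    have h1 : 1 / lam < 1 := by rw [div_lt_iff₀ hl]; linarith
    have h2 : 1 / lam < 2 * (1 / lam) := by linarith
    have h3 : 1 / lam < 1 / (lam - 1) := one_div_lt_one_div_of_lt (by linarith) (by linarith)
    obtain ⟨β, hb1, hb2⟩ := exists_between (lt_min h1 (lt_min h2 h3))
    rw [lt_min_iff, lt_min_iff] at hb2
    obtain ⟨hb2, hb3, hb4⟩ := hb2
    have hlb : 1 < lam * β := by rw [← hal]; exact mul_lt_mul_of_pos_left hb1 hl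
    have hlb2 : lam * β < 2 := by nlinarith
    have hlb3 : (lam - 1) * β < 1 := by
      rw [lt_div_iff₀ (by linarith)] at hb4; linarith
    have hb0 : 0 < β := by linarith
    have key := core (fun u => Complex.exp (Complex.I * u) - 1)
      (by fun_prop) lam β 0 ((lam - 1) * β) (2 + 2 * (2 * lam) ^ β) hl hlb hlb2 (by linarith)
      hlb3 (by positivity) ?_ ?_ ?_
    · obtain ⟨C, hC, hc⟩ := key
      obtain ⟨C', hC', t₀, ht₀, H⟩ := final_bound hb1 hε hC
      refine ⟨C', hC', t₀, ht₀, fun t ht htt => le_trans (le_of_eq ?_) ((hc t ht).trans (H t ht htt))⟩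
      rw [subst_lam (fun u => Complex.exp (Complex.I * u) - 1) hl, J1 h0 h1, eexp, if_neg (by linarith)]
      congr 1
      simp only [Complex.real_smul]
      push_cast
      simp only [mul_assoc]
      ring
    · intro u hu
      have : (0:ℝ) < (2 * lam) ^ β := by positivity
      refine interp (p := 1) (q := 0) hu (by linarith) ?_ ?_ hb0.le hb2.le
      · rw [Real.rpow_one]; refine (E1 hu.le).trans ?_; nlinarith
      · rw [Real.rpow_zero]; linarith [E1' u]
    · intro u hu
      have : (0:ℝ) < (2 * lam) ^ β := by positivity
      rw [Real.rpow_zero]; linarith [E1' u]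
    · intro t ht x hx
      have hx0 := hx.1
      obtain ⟨d1, d2⟩ := disc hl ht hx
      set D := t * x ^ (-lam) - t * (⌊1/x⌋ : ℝ) ^ lam with hD
      set W := 2 * lam * t * x ^ (-(lam - 1)) with hW
      have hWp : 0 < W := by positivity
      have b1 := E1diff (t * (⌊1/x⌋ : ℝ) ^ lam) (t * x ^ (-lam))
      rw [← hD, abs_of_nonneg d1] at b1
      have b2 : ‖(Complex.exp (Complex.I * ((t * (⌊1/x⌋ : ℝ) ^ lam : ℝ) : ℂ)) - 1) -
          (Complex.exp (Complex.I * ((t * x ^ (-lam) : ℝ) : ℂ)) - 1)‖ ≤ 2 := by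
        rw [sub_sub_sub_cancel_right]
        refine (norm_sub_le _ _).trans ?_
        rw [Complex.norm_exp_I_mul_ofReal, Complex.norm_exp_I_mul_ofReal]; norm_num
      have b3 := interp (p := 1) (q := 0) (K := 2) (b := β) hWp (by norm_num)
        (b1.trans (by rw [Real.rpow_one]; linarith)) (b2.trans (by rw [Real.rpow_zero]; norm_num))
        hb0.le hb2.le
      refine b3.trans ?_
      have e : W ^ β = (2 * lam) ^ β * t ^ β * x ^ (-((lam - 1) * β)) := by
        rw [hW, Real.mul_rpow (by positivity) (by positivity), Real.mul_rpow (by positivity) ht.le,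
          ← Real.rpow_mul hx0.le, neg_mul]
      rw [e]
      have : 0 ≤ t ^ β * x ^ (-((lam - 1) * β)) := by positivity
      nlinarith
end
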